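/- arXiv:1205.5424 — 4 statements merged into one kernel-verified Lean document; each statement's English description precedes it below -/
import Mathlib

section
/- (Partial derivatives of the Tutte polynomial as orientation generating functions, realizable case.) For every vector configuration v : Fin n → V, every linear map π : V →ₗ[ℝ] W with v' = π ∘ v, all natural numbers p, q, and all real x, y: the iterated partial derivative ∂^{p+q} t / ∂x^p ∂y^q of the two-variable polynomial t(M,M';x,y,1), evaluated at (x,y), equals p! · q! · ∑_{A ⊆ Fin n with θ̄*_{M'}(A) = p and θ̄_M(A) = q} x^{θ*_{M'}(A)} y^{θ_M(A)}. -/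
open Set Submodule

/-- The reorientation of the vector configuration `v` on the subset `A`:
vectors indexed by `A` are negated. -/
def reorient {n : ℕ} {V : Type*} [AddCommGroup V] (v : Fin n → V) (A : Finset (Fin n)) :
    Fin n → V :=
  fun i => if i ∈ A then -v i else v i

/-- `a` is orientation-active for the configuration `w`: it is the smallest element of a
positive circuit, i.e. there is a nonnegative linear dependence with positive coefficient
at `a` and zero coefficients below `a`. -/
def OActive {n : ℕ} {V : Type*} [AddCommGroup V] [Module ℝ V]
    (w : Fin n → V) (a : Fin n) : Prop :=
  ∃ c : Fin n → ℝ, (∀ i, 0 ≤ c i) ∧ (∑ i, c i • w i) = 0 ∧ 0 < c a ∧ ∀ i < a, c i = 0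

/-- `a` is dually orientation-active for the configuration `w`: it is the smallest element of
a positive cocircuit, i.e. there is a linear functional, nonnegative on the configuration,
positive at `w a` and vanishing on the vectors below `a`. -/
def ODualActive {n : ℕ} {V : Type*} [AddCommGroup V] [Module ℝ V]
    (w : Fin n → V) (a : Fin n) : Prop :=
  ∃ f : V →ₗ[ℝ] ℝ, (∀ i, 0 ≤ f (w i)) ∧ 0 < f (w a) ∧ ∀ i < a, f (w i) = 0

/-- `θ*(A)`: the number of elements outside `A` that are dually orientation-active for `v_A`. -/
noncomputable def thetaStar {n : ℕ} {V : Type*} [AddCommGroup V] [Module ℝ V]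
    (v : Fin n → V) (A : Finset (Fin n)) : ℕ :=
  {a : Fin n | a ∉ A ∧ ODualActive (reorient v A) a}.ncard

/-- `θ̄*(A)`: the number of elements of `A` that are dually orientation-active for `v_A`. -/
noncomputable def thetaStarBar {n : ℕ} {V : Type*} [AddCommGroup V] [Module ℝ V]
    (v : Fin n → V) (A : Finset (Fin n)) : ℕ :=
  {a : Fin n | a ∈ A ∧ ODualActive (reorient v A) a}.ncard

/-- `θ(A)`: the number of elements outside `A` that are orientation-active for `v_A`. -/
noncomputable def theta {n : ℕ} {V : Type*} [AddCommGroup V] [Module ℝ V]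
    (v : Fin n → V) (A : Finset (Fin n)) : ℕ :=
  {a : Fin n | a ∉ A ∧ OActive (reorient v A) a}.ncard

/-- `θ̄(A)`: the number of elements of `A` that are orientation-active for `v_A`. -/
noncomputable def thetaBar {n : ℕ} {V : Type*} [AddCommGroup V] [Module ℝ V]
    (v : Fin n → V) (A : Finset (Fin n)) : ℕ :=
  {a : Fin n | a ∈ A ∧ OActive (reorient v A) a}.ncard

/-- The rank of a set of indices: the dimension of the span of the corresponding vectors. -/
noncomputable def vrank {n : ℕ} {V : Type*} [AddCommGroup V] [Module ℝ V]
    (v : Fin n → V) (S : Set (Fin n)) : ℕ :=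
  Module.finrank ℝ ↥(span ℝ (v '' S))

/-- The Tutte polynomial of the matroid realized by the configuration `v`:
`t(x,y) = ∑_{A ⊆ Fin n} (x-1)^(r(E) - r(A)) * (y-1)^(|A| - r(A))`. -/
noncomputable def tutteV {n : ℕ} {V : Type*} [AddCommGroup V] [Module ℝ V]
    (v : Fin n → V) (x y : ℝ) : ℝ :=
  ∑ A : Finset (Fin n),
    (x - 1) ^ (vrank v Set.univ - vrank v ↑A) * (y - 1) ^ (A.card - vrank v ↑A)

/-- The evaluation at `z = 1` of the 3-variable Tutte polynomial of the oriented matroid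
perspective realized by the configurations `v` (for `M`) and `v'` (for `M'`):
`t(M,M';x,y,1) = ∑_{A ⊆ Fin n} (x-1)^(r'(E) - r'(A)) * (y-1)^(|A| - r(A))`. -/
noncomputable def tuttePerspV {n : ℕ} {V W : Type*} [AddCommGroup V] [Module ℝ V]
    [AddCommGroup W] [Module ℝ W] (v : Fin n → V) (v' : Fin n → W) (x y : ℝ) : ℝ :=
  ∑ A : Finset (Fin n),
    (x - 1) ^ (vrank v' Set.univ - vrank v' ↑A) * (y - 1) ^ (A.card - vrank v ↑A)


set_option linter.unusedSectionVars false

/-! ### Rank lemmas -/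

lemma s16_finrank_map {V : Type*} [AddCommGroup V] [Module ℝ V] [FiniteDimensional ℝ V]
    (S : Submodule ℝ V) (e : V) (he : e ∈ S) :
    Module.finrank ℝ (S.map (span ℝ {e}).mkQ) + Module.finrank ℝ (span ℝ {e})
      = Module.finrank ℝ S := by
  have h := LinearMap.finrank_range_add_finrank_ker ((span ℝ {e}).mkQ.domRestrict S)
  rw [LinearMap.range_domRestrict, LinearMap.ker_domRestrict, Submodule.ker_mkQ] at h
  have hle : span ℝ {e} ≤ S := by simpa [Submodule.span_le] using he
  rw [← h]
  congr 1
  exact (LinearEquiv.finrank_eq (Submodule.comapSubtypeEquivOfLe hle)).symm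

lemma s16_rank_del {n : ℕ} {V : Type*} [AddCommGroup V] [Module ℝ V]
    (v : Fin (n + 1) → V) (S : Set (Fin n)) :
    vrank v (Fin.castSucc '' S) = vrank (v ∘ Fin.castSucc) S := by
  rw [vrank, vrank, Set.image_comp]

lemma s16_span_insert {n : ℕ} {V : Type*} [AddCommGroup V] [Module ℝ V]
    (v : Fin (n + 1) → V) (S : Set (Fin n)) :
    span ℝ (v '' (insert (Fin.last n) (Fin.castSucc '' S))) =
      span ℝ {v (Fin.last n)} ⊔ span ℝ ((v ∘ Fin.castSucc) '' S) := by
  rw [Set.image_insert_eq, Set.image_image, Submodule.span_insert]; rfl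

lemma s16_rank_con {n : ℕ} {V : Type*} [AddCommGroup V] [Module ℝ V] [FiniteDimensional ℝ V]
    (v : Fin (n + 1) → V) (S : Set (Fin n)) :
    vrank v (insert (Fin.last n) (Fin.castSucc '' S)) =
      vrank ((span ℝ {v (Fin.last n)}).mkQ ∘ (v ∘ Fin.castSucc)) S +
        Module.finrank ℝ (span ℝ {v (Fin.last n)}) := by
  have hmem : v (Fin.last n) ∈ span ℝ {v (Fin.last n)} ⊔ span ℝ ((v ∘ Fin.castSucc) '' S) :=
    Submodule.mem_sup_left (Submodule.mem_span_singleton_self _)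
  unfold vrank
  rw [s16_span_insert, ← s16_finrank_map _ _ hmem, Submodule.map_sup, Set.image_comp _ (v ∘ _),
    ← Submodule.map_span]
  have : map (span ℝ {v (Fin.last n)}).mkQ (span ℝ {v (Fin.last n)}) = ⊥ := by
    simp
  rw [this, bot_sup_eq]

lemma s16_rank_mem {n : ℕ} {V : Type*} [AddCommGroup V] [Module ℝ V]
    (v : Fin (n + 1) → V) (S : Set (Fin n))
    (h : v (Fin.last n) ∈ span ℝ ((v ∘ Fin.castSucc) '' S)) :
    vrank v (insert (Fin.last n) (Fin.castSucc '' S)) = vrank (v ∘ Fin.castSucc) S := by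
  unfold vrank
  rw [s16_span_insert, sup_eq_right.2]
  simpa [Submodule.span_le] using h

lemma s16_rank_notMem {n : ℕ} {V : Type*} [AddCommGroup V] [Module ℝ V] [FiniteDimensional ℝ V]
    (v : Fin (n + 1) → V) (S : Set (Fin n))
    (h : v (Fin.last n) ∉ span ℝ ((v ∘ Fin.castSucc) '' S)) :
    vrank v (insert (Fin.last n) (Fin.castSucc '' S)) = vrank (v ∘ Fin.castSucc) S + 1 := by
  unfold vrank
  rw [s16_span_insert]
  have h0 : v (Fin.last n) ≠ 0 := by
    intro h0; rw [h0] at h; exact h (Submodule.zero_mem _)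
  have h1 := Submodule.finrank_sup_add_finrank_inf_eq (span ℝ {v (Fin.last n)})
    (span ℝ ((v ∘ Fin.castSucc) '' S))
  have h2 : span ℝ {v (Fin.last n)} ⊓ span ℝ ((v ∘ Fin.castSucc) '' S) = ⊥ := by
    rw [← disjoint_iff]
    exact ((Submodule.disjoint_span_singleton' h0).2 h).symm
  rw [h2, finrank_bot, finrank_span_singleton h0] at h1
  omega

lemma s16_rank_le_card {n : ℕ} {V : Type*} [AddCommGroup V] [Module ℝ V]
    (v : Fin n → V) (A : Finset (Fin n)) : vrank v ↑A ≤ A.card := by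
  classical
  unfold vrank
  rw [← Finset.coe_image]
  exact (finrank_span_finset_le_card _).trans Finset.card_image_le

lemma s16_rank_mono {n : ℕ} {V : Type*} [AddCommGroup V] [Module ℝ V] [FiniteDimensional ℝ V]
    (v : Fin n → V) (S T : Set (Fin n)) (h : S ⊆ T) : vrank v S ≤ vrank v T :=
  Submodule.finrank_mono (Submodule.span_mono (Set.image_mono h))

lemma s16_univ (n : ℕ) : (Set.univ : Set (Fin (n + 1))) =
    insert (Fin.last n) (Fin.castSucc '' Set.univ) := by
  ext i
  refine Fin.lastCases ?_ (fun j => ?_) i <;> simp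

/-! ### Sum over subsets -/

lemma s16_sum_split {n : ℕ} (g : Finset (Fin (n + 1)) → ℝ) :
    ∑ A : Finset (Fin (n + 1)), g A =
      ∑ A : Finset (Fin n), (g (A.map Fin.castSuccEmb) +
        g (insert (Fin.last n) (A.map Fin.castSuccEmb))) := by
  classical
  rw [← Finset.powerset_univ, Fin.univ_castSuccEmb, Finset.cons_eq_insert,
    Finset.sum_powerset_insert (by simp), ← Finset.sum_add_distrib]
  symm
  refine Finset.sum_bij (fun A _ => A.map Fin.castSuccEmb) ?_ ?_ ?_ ?_
  · intro A _
    simp only [Finset.mem_powerset]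
    exact Finset.map_subset_map.2 (Finset.subset_univ _)
  · intro A _ B _ h
    exact Finset.map_injective _ h
  · intro B hB
    rw [Finset.mem_powerset, Finset.subset_map_iff] at hB
    obtain ⟨u, _, rfl⟩ := hB
    exact ⟨u, Finset.mem_univ _, rfl⟩
  · intro A _; rfl

/-! ### Deletion-contraction for the Tutte polynomial -/

section tutte
variable {n : ℕ} {V W : Type*} [AddCommGroup V] [Module ℝ V] [FiniteDimensional ℝ V]
    [AddCommGroup W] [Module ℝ W] [FiniteDimensional ℝ W]

/-- contraction of the last element -/
def s16Con {n : ℕ} {V : Type*} [AddCommGroup V] [Module ℝ V] (v : Fin (n + 1) → V) :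
    Fin n → V ⧸ span ℝ {v (Fin.last n)} :=
  (span ℝ {v (Fin.last n)}).mkQ ∘ (v ∘ Fin.castSucc)

lemma s16_tutte_generic (v : Fin (n + 1) → V) (v' : Fin (n + 1) → W) (x y : ℝ)
    (h0 : v (Fin.last n) ≠ 0)
    (h1 : v' (Fin.last n) ∈ span ℝ (Set.range (v' ∘ Fin.castSucc))) :
    tuttePerspV v v' x y = tuttePerspV (v ∘ Fin.castSucc) (v' ∘ Fin.castSucc) x y
      + tuttePerspV (s16Con v) (s16Con v') x y := by
  unfold tuttePerspV
  rw [s16_sum_split, ← Finset.sum_add_distrib]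
  refine Finset.sum_congr rfl fun A _ => ?_
  rw [← Set.image_univ] at h1
  congr 1
  · rw [s16_univ, s16_rank_mem _ _ h1]
    simp [s16_rank_del]
  · rw [s16_univ, s16_rank_con]
    simp only [Finset.coe_insert, Finset.coe_map, Fin.coe_castSuccEmb, s16_rank_con]
    rw [finrank_span_singleton h0, Finset.card_insert_of_notMem (by simp), Finset.card_map,
      Nat.add_sub_add_right, Nat.add_sub_add_right]
    rfl

lemma s16_tutte_loop (v : Fin (n + 1) → V) (v' : Fin (n + 1) → W) (x y : ℝ)
    (h0 : v (Fin.last n) = 0) (h1 : v' (Fin.last n) = 0) :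
    tuttePerspV v v' x y = y * tuttePerspV (v ∘ Fin.castSucc) (v' ∘ Fin.castSucc) x y := by
  unfold tuttePerspV
  rw [s16_sum_split, Finset.mul_sum]
  refine Finset.sum_congr rfl fun A _ => ?_
  have e0 : ∀ S, v (Fin.last n) ∈ span ℝ ((v ∘ Fin.castSucc) '' S) := fun S => by
    rw [h0]; exact Submodule.zero_mem _
  have e1 : ∀ S, v' (Fin.last n) ∈ span ℝ ((v' ∘ Fin.castSucc) '' S) := fun S => by
    rw [h1]; exact Submodule.zero_mem _
  rw [s16_univ, s16_rank_mem _ _ (e1 _)]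
  simp only [Finset.coe_insert, Finset.coe_map, Fin.coe_castSuccEmb, s16_rank_mem _ _ (e1 _),
    s16_rank_mem _ _ (e0 _), s16_rank_del]
  rw [Finset.card_insert_of_notMem (by simp), Finset.card_map,
    Nat.sub_add_comm (s16_rank_le_card _ _), pow_succ]
  ring

lemma s16_tutte_coloop (v : Fin (n + 1) → V) (v' : Fin (n + 1) → W) (x y : ℝ)
    (h0 : v (Fin.last n) ∉ span ℝ (Set.range (v ∘ Fin.castSucc)))
    (h1 : v' (Fin.last n) ∉ span ℝ (Set.range (v' ∘ Fin.castSucc))) :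
    tuttePerspV v v' x y = x * tuttePerspV (s16Con v) (s16Con v') x y := by
  unfold tuttePerspV
  rw [s16_sum_split, Finset.mul_sum]
  refine Finset.sum_congr rfl fun A _ => ?_
  have e0 : ∀ S, vrank (v ∘ Fin.castSucc) S = vrank (s16Con v) S := fun S => by
    have hn : v (Fin.last n) ∉ span ℝ ((v ∘ Fin.castSucc) '' S) := fun h =>
      h0 (Submodule.span_mono (Set.image_subset_range _ _) h)
    have a := s16_rank_notMem v S hn
    rw [s16_rank_con, finrank_span_singleton] at a
    · exact (Nat.add_right_cancel a).symm
    · intro h; rw [h] at hn; exact hn (Submodule.zero_mem _)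
  have e1 : ∀ S, vrank (v' ∘ Fin.castSucc) S = vrank (s16Con v') S := fun S => by
    have hn : v' (Fin.last n) ∉ span ℝ ((v' ∘ Fin.castSucc) '' S) := fun h =>
      h1 (Submodule.span_mono (Set.image_subset_range _ _) h)
    have a := s16_rank_notMem v' S hn
    rw [s16_rank_con, finrank_span_singleton] at a
    · exact (Nat.add_right_cancel a).symm
    · intro h; rw [h] at hn; exact hn (Submodule.zero_mem _)
  have f0 : ∀ S, vrank v (insert (Fin.last n) (Fin.castSucc '' S)) = vrank (s16Con v) S + 1 :=
    fun S => by
      rw [s16_rank_notMem, e0]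
      exact fun h => h0 (Submodule.span_mono (Set.image_subset_range _ _) h)
  have f1 : ∀ S, vrank v' (insert (Fin.last n) (Fin.castSucc '' S)) = vrank (s16Con v') S + 1 :=
    fun S => by
      rw [s16_rank_notMem, e1]
      exact fun h => h1 (Submodule.span_mono (Set.image_subset_range _ _) h)
  rw [s16_univ, f1]
  simp only [Finset.coe_insert, Finset.coe_map, Fin.coe_castSuccEmb, f0, f1, s16_rank_del, e0, e1]
  rw [Finset.card_insert_of_notMem (by simp), Finset.card_map,
    Nat.add_sub_add_right, Nat.add_sub_add_right,
    Nat.sub_add_comm (s16_rank_mono _ _ _ (Set.subset_univ _)), pow_succ]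
  ring

end tutte

/-! ### Abstract activities of a pair of orthogonal subspaces -/

/-- Abstract activity: there is a nonnegative vector of `K`, positive at `a`, vanishing below `a`,
and with the last coordinate satisfying `T`. -/
def s16Act {n : ℕ} (K : (Fin n → ℝ) → ℝ → Prop) (T : ℝ → Prop) (a : Fin n) : Prop :=
  ∃ (c : Fin n → ℝ) (t : ℝ), K c t ∧ T t ∧ (∀ i, 0 ≤ c i) ∧ 0 < c a ∧ ∀ i < a, c i = 0

/-- closed under nonnegative combinations -/
def s16Cone {n : ℕ} (K : (Fin n → ℝ) → ℝ → Prop) : Prop :=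
  ∀ c t d s α β, K c t → K d s → K (α • c + β • d) (α * t + β * s)

/-- the positive sign gives contraction-type activities -/
def s16Pos {n : ℕ} (K : (Fin n → ℝ) → ℝ → Prop) : Prop :=
  ∀ a, (s16Act K (0 ≤ ·) a ↔ s16Act K (fun _ => True) a) ∧
    (s16Act K (· ≤ 0) a ↔ s16Act K (· = 0) a)

/-- the negative sign gives contraction-type activities -/
def s16Neg {n : ℕ} (K : (Fin n → ℝ) → ℝ → Prop) : Prop :=
  ∀ a, (s16Act K (· ≤ 0) a ↔ s16Act K (fun _ => True) a) ∧
    (s16Act K (0 ≤ ·) a ↔ s16Act K (· = 0) a)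

/-- some strictly positive activity -/
def s16Up {n : ℕ} (K : (Fin n → ℝ) → ℝ → Prop) : Prop :=
  ∃ a, s16Act K (0 < ·) a ∧ ¬ s16Act K (· = 0) a

/-- some strictly negative activity -/
def s16Dn {n : ℕ} (K : (Fin n → ℝ) → ℝ → Prop) : Prop :=
  ∃ a, s16Act K (· < 0) a ∧ ¬ s16Act K (· = 0) a

lemma s16Act_mono {n : ℕ} {K : (Fin n → ℝ) → ℝ → Prop} {T U : ℝ → Prop} {a : Fin n}
    (h : s16Act K T a) (hTU : ∀ t, T t → U t) : s16Act K U a := by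
  obtain ⟨c, t, h1, h2, h3⟩ := h
  exact ⟨c, t, h1, hTU _ h2, h3⟩

lemma s16Act_or {n : ℕ} {K : (Fin n → ℝ) → ℝ → Prop} {T U S : ℝ → Prop} {a : Fin n}
    (h : s16Act K T a) (hTU : ∀ t, T t → U t ∨ S t) : s16Act K U a ∨ s16Act K S a := by
  obtain ⟨c, t, h1, h2, h3⟩ := h
  rcases hTU _ h2 with h | h
  · exact Or.inl ⟨c, t, h1, h, h3⟩
  · exact Or.inr ⟨c, t, h1, h, h3⟩

lemma s16Neg_of_not_up {n : ℕ} {K : (Fin n → ℝ) → ℝ → Prop} (h : ¬ s16Up K) : s16Neg K := by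
  have h' : ∀ a, s16Act K (0 < ·) a → s16Act K (· = 0) a := by
    intro a ha; by_contra hb; exact h ⟨a, ha, hb⟩
  intro a
  refine ⟨⟨fun k => s16Act_mono k fun _ _ => trivial, fun k => ?_⟩,
    ⟨fun k => ?_, fun k => s16Act_mono k fun _ h => h.ge⟩⟩
  · rcases s16Act_or (U := (· ≤ 0)) (S := (0 < ·)) k fun t _ => le_or_gt t 0 with k | k
    · exact k
    · exact s16Act_mono (h' a k) fun _ h => h.le
  · rcases s16Act_or (U := (· = 0)) (S := (0 < ·)) k
      fun t ht => (eq_or_lt_of_le ht).imp_left Eq.symm with k | k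
    · exact k
    · exact h' a k

lemma s16Pos_of_not_dn {n : ℕ} {K : (Fin n → ℝ) → ℝ → Prop} (h : ¬ s16Dn K) : s16Pos K := by
  have h' : ∀ a, s16Act K (· < 0) a → s16Act K (· = 0) a := by
    intro a ha; by_contra hb; exact h ⟨a, ha, hb⟩
  intro a
  refine ⟨⟨fun k => s16Act_mono k fun _ _ => trivial, fun k => ?_⟩,
    ⟨fun k => ?_, fun k => s16Act_mono k fun _ h => h.le⟩⟩
  · rcases s16Act_or (U := (0 ≤ ·)) (S := (· < 0)) k fun t _ => le_or_gt 0 t with k | k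
    · exact k
    · exact s16Act_mono (h' a k) fun _ h => h.ge
  · rcases s16Act_or (U := (· = 0)) (S := (· < 0)) k
      fun t ht => eq_or_lt_of_le ht with k | k
    · exact k
    · exact h' a k

lemma s16_not_dn_of_up {n : ℕ} {K : (Fin n → ℝ) → ℝ → Prop} (hK : s16Cone K)
    (h : s16Up K) : ¬ s16Dn K := by
  rintro ⟨b, ⟨d, s, d1, d2, d3, d4, d5⟩, hb⟩
  obtain ⟨a, ⟨c, t, c1, c2, c3, c4, c5⟩, ha⟩ := h
  have key := hK _ _ _ _ (-s) t c1 d1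
  have e : -s * t + t * s = 0 := by ring
  have hs : 0 < -s := by linarith
  have nn : ∀ i, 0 ≤ ((-s) • c + t • d) i := fun i => by
    have := mul_nonneg hs.le (c3 i)
    have := mul_nonneg c2.le (d3 i)
    simp only [Pi.add_apply, Pi.smul_apply, smul_eq_mul]; linarith
  rcases le_total a b with hab | hab
  · refine ha ⟨_, _, key, e, nn, ?_, ?_⟩
    · have := mul_pos hs c4
      have := mul_nonneg c2.le (d3 a)
      simp only [Pi.add_apply, Pi.smul_apply, smul_eq_mul]; linarith
    · intro i hi
      simp [c5 i hi, d5 i (hi.trans_le hab)]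
  · refine hb ⟨_, _, key, e, nn, ?_, ?_⟩
    · have := mul_nonneg hs.le (c3 b)
      have := mul_pos c2 d4
      simp only [Pi.add_apply, Pi.smul_apply, smul_eq_mul]; linarith
    · intro i hi
      simp [d5 i hi, c5 i (hi.trans_le hab)]

/-- The two cases of the core dichotomy. -/
lemma s16_core {n : ℕ} {K L : (Fin n → ℝ) → ℝ → Prop} (hK : s16Cone K) (hL : s16Cone L)
    (orth : ∀ c t d s, K c t → L d s → ∑ i, c i * d i + t * s = 0) :
    (s16Pos K ∧ s16Neg L) ∨ (s16Neg K ∧ s16Pos L) := by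
  have h1 : s16Up K → ¬ s16Up L := by
    rintro ⟨a, ⟨c, t, c1, c2, c3, -⟩, -⟩ ⟨b, ⟨d, s, d1, d2, d3, -⟩, -⟩
    have := orth _ _ _ _ c1 d1
    have h : 0 ≤ ∑ i, c i * d i := Finset.sum_nonneg fun i _ => mul_nonneg (c3 i) (d3 i)
    have := mul_pos c2 d2
    linarith
  have h2 : s16Dn K → ¬ s16Dn L := by
    rintro ⟨a, ⟨c, t, c1, c2, c3, -⟩, -⟩ ⟨b, ⟨d, s, d1, d2, d3, -⟩, -⟩
    have := orth _ _ _ _ c1 d1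
    have h : 0 ≤ ∑ i, c i * d i := Finset.sum_nonneg fun i _ => mul_nonneg (c3 i) (d3 i)
    have := mul_pos_of_neg_of_neg c2 d2
    linarith
  by_cases a : s16Up K
  · exact Or.inl ⟨s16Pos_of_not_dn (s16_not_dn_of_up hK a), s16Neg_of_not_up (h1 a)⟩
  by_cases b : s16Dn K
  · exact Or.inr ⟨s16Neg_of_not_up a, s16Pos_of_not_dn (h2 b)⟩
  by_cases c : s16Up L
  · exact Or.inr ⟨s16Neg_of_not_up a, s16Pos_of_not_dn (s16_not_dn_of_up hL c)⟩
  · exact Or.inl ⟨s16Pos_of_not_dn b, s16Neg_of_not_up c⟩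

/-! ### Translation to configurations -/

section config
variable {n : ℕ} {V W : Type*} [AddCommGroup V] [Module ℝ V]
    [AddCommGroup W] [Module ℝ W]

/-- linear relations -/
def s16K (w : Fin n → V) (e : V) (c : Fin n → ℝ) (t : ℝ) : Prop :=
  ∑ i, c i • w i + t • e = 0

/-- values of linear functionals -/
def s16L (w : Fin n → V) (e : V) (c : Fin n → ℝ) (t : ℝ) : Prop :=
  ∃ f : V →ₗ[ℝ] ℝ, (∀ i, f (w i) = c i) ∧ f e = t

lemma s16K_cone (w : Fin n → V) (e : V) : s16Cone (s16K w e) := by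
  intro c t d s α β h1 h2
  unfold s16K at *
  have : ∑ i, (α • c + β • d) i • w i + (α * t + β * s) • e =
      α • (∑ i, c i • w i + t • e) + β • (∑ i, d i • w i + s • e) := by
    simp only [Pi.add_apply, Pi.smul_apply, smul_eq_mul, add_smul, mul_smul,
      Finset.sum_add_distrib, smul_add, Finset.smul_sum]
    abel
  rw [this, h1, h2]; simp

lemma s16L_cone (w : Fin n → V) (e : V) : s16Cone (s16L w e) := by
  rintro c t d s α β ⟨f, f1, f2⟩ ⟨g, g1, g2⟩
  exact ⟨α • f + β • g, fun i => by simp [f1, g1], by simp [f2, g2]⟩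

lemma s16_orth (w : Fin n → V) (e : V) (π : V →ₗ[ℝ] W) (c : Fin n → ℝ) (t : ℝ) (d : Fin n → ℝ)
    (s : ℝ) (h : s16K w e c t) (h' : s16L (π ∘ w) (π e) d s) : ∑ i, c i * d i + t * s = 0 := by
  obtain ⟨f, f1, f2⟩ := h'
  have := congrArg (f ∘ₗ π) h
  simp only [map_add, map_sum, map_smul, map_zero, LinearMap.comp_apply, smul_eq_mul, f2] at this
  rw [← this]
  congr 1
  refine Finset.sum_congr rfl fun i _ => ?_
  rw [← f1]; rfl

lemma s16_O_snoc (w : Fin n → V) (e : V) (a : Fin n) :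
    OActive (Fin.snoc w e : Fin (n + 1) → V) a.castSucc ↔ s16Act (s16K w e) (0 ≤ ·) a := by
  constructor
  · rintro ⟨c, c1, c2, c3, c4⟩
    refine ⟨fun i => c i.castSucc, c (Fin.last n), ?_, c1 _, fun i => c1 _, c3, fun i hi => c4 _ ?_⟩
    · rw [Fin.sum_univ_castSucc] at c2
      simpa [s16K] using c2
    · simpa using hi
  · rintro ⟨c, t, c0, c1, c2, c3, c4⟩
    refine ⟨Fin.snoc c t, ?_, ?_, ?_, ?_⟩
    · intro i; refine Fin.lastCases ?_ (fun j => ?_) i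
      · simpa using c1
      · simpa using c2 j
    · rw [Fin.sum_univ_castSucc]; simpa [s16K] using c0
    · simpa using c3
    · intro i; refine Fin.lastCases ?_ (fun j => ?_) i
      · intro h; exact absurd h (Fin.le_last _).not_gt
      · intro h; simpa using c4 j (by simpa using h)

lemma s16_O_snoc_neg (w : Fin n → V) (e : V) (a : Fin n) :
    OActive (Fin.snoc w (-e) : Fin (n + 1) → V) a.castSucc ↔ s16Act (s16K w e) (· ≤ 0) a := by
  rw [s16_O_snoc]
  constructor
  · rintro ⟨c, t, c0, c1, c2⟩
    exact ⟨c, -t, by simpa [s16K] using c0, by simpa using c1, c2⟩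
  · rintro ⟨c, t, c0, c1, c2⟩
    exact ⟨c, -t, by simpa [s16K] using c0, by simpa using c1, c2⟩

lemma s16_O_del (w : Fin n → V) (e : V) (a : Fin n) :
    OActive w a ↔ s16Act (s16K w e) (· = 0) a := by
  constructor
  · rintro ⟨c, c1, c2, c3⟩
    exact ⟨c, 0, by simpa [s16K] using c2, rfl, c1, c3⟩
  · rintro ⟨c, t, c0, rfl, c2, c3⟩
    exact ⟨c, c2, by simpa [s16K] using c0, c3⟩

lemma s16_O_con (w : Fin n → V) (e : V) (a : Fin n) :
    OActive ((span ℝ {e}).mkQ ∘ w) a ↔ s16Act (s16K w e) (fun _ => True) a := by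
  have key : ∀ c : Fin n → ℝ, ∑ i, c i • ((span ℝ {e}).mkQ ∘ w) i = 0 ↔ ∃ t, s16K w e c t := by
    intro c
    have : ∑ i, c i • ((span ℝ {e}).mkQ ∘ w) i = (span ℝ {e}).mkQ (∑ i, c i • w i) := by
      simp [map_sum]
    rw [this, ← LinearMap.mem_ker, Submodule.ker_mkQ, Submodule.mem_span_singleton]
    constructor
    · rintro ⟨t, ht⟩; exact ⟨-t, by simp [s16K, ht]⟩
    · rintro ⟨t, ht⟩; exact ⟨-t, by rw [neg_smul]; exact (eq_neg_of_add_eq_zero_left ht).symm⟩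
  constructor
  · rintro ⟨c, c1, c2, c3⟩
    obtain ⟨t, ht⟩ := (key c).1 c2
    exact ⟨c, t, ht, trivial, c1, c3⟩
  · rintro ⟨c, t, c0, -, c2, c3⟩
    exact ⟨c, c2, (key c).2 ⟨t, c0⟩, c3⟩

lemma s16_O_last (w : Fin (n + 1) → V) : OActive w (Fin.last n) ↔ w (Fin.last n) = 0 := by
  constructor
  · rintro ⟨c, -, c2, c3, c4⟩
    rw [Fin.sum_univ_castSucc, Finset.sum_eq_zero, zero_add] at c2
    · exact (smul_eq_zero.1 c2).resolve_left c3.ne'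
    · intro i _; rw [c4 _ (Fin.castSucc_lt_last i), zero_smul]
  · intro h
    refine ⟨Pi.single (Fin.last n) 1, ?_, ?_, ?_, ?_⟩
    · intro i; exact (Pi.single_nonneg.2 zero_le_one : (0 : Fin (n+1) → ℝ) ≤ _) i
    · rw [Fin.sum_univ_castSucc]; simp [h]
    · simp
    · intro i hi; simp [hi.ne]

lemma s16_D_snoc (w : Fin n → V) (e : V) (a : Fin n) :
    ODualActive (Fin.snoc w e : Fin (n + 1) → V) a.castSucc ↔ s16Act (s16L w e) (0 ≤ ·) a := by
  constructor
  · rintro ⟨f, f1, f2, f3⟩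
    refine ⟨fun i => f (w i), f e, ⟨f, fun _ => rfl, rfl⟩, ?_, ?_, ?_, ?_⟩
    · simpa using f1 (Fin.last n)
    · intro i; simpa using f1 i.castSucc
    · simpa using f2
    · intro i hi; simpa using f3 i.castSucc (by simpa using hi)
  · rintro ⟨c, t, ⟨f, f1, f2⟩, c1, c2, c3, c4⟩
    refine ⟨f, ?_, ?_, ?_⟩
    · intro i; refine Fin.lastCases ?_ (fun j => ?_) i
      · simpa [f2] using c1
      · simpa [f1] using c2 j
    · simpa [f1] using c3
    · intro i; refine Fin.lastCases ?_ (fun j => ?_) i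
      · intro h; exact absurd h (Fin.le_last _).not_gt
      · intro h; simpa [f1] using c4 j (by simpa using h)

lemma s16_D_snoc_neg (w : Fin n → V) (e : V) (a : Fin n) :
    ODualActive (Fin.snoc w (-e) : Fin (n + 1) → V) a.castSucc ↔ s16Act (s16L w e) (· ≤ 0) a := by
  rw [s16_D_snoc]
  constructor
  · rintro ⟨c, t, ⟨f, f1, f2⟩, c1, c2⟩
    exact ⟨c, -t, ⟨f, f1, by simp [← f2]⟩, by simpa using c1, c2⟩
  · rintro ⟨c, t, ⟨f, f1, f2⟩, c1, c2⟩
    exact ⟨c, -t, ⟨f, f1, by simp [← f2]⟩, by simpa using c1, c2⟩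

lemma s16_D_del (w : Fin n → V) (e : V) (a : Fin n) :
    ODualActive w a ↔ s16Act (s16L w e) (fun _ => True) a := by
  constructor
  · rintro ⟨f, f1⟩
    exact ⟨fun i => f (w i), f e, ⟨f, fun _ => rfl, rfl⟩, trivial, f1⟩
  · rintro ⟨c, t, ⟨f, f1, f2⟩, -, c2⟩
    obtain rfl : (fun i => f (w i)) = c := funext f1
    exact ⟨f, c2⟩

lemma s16_D_con (w : Fin n → V) (e : V) (a : Fin n) :
    ODualActive ((span ℝ {e}).mkQ ∘ w) a ↔ s16Act (s16L w e) (· = 0) a := by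
  constructor
  · rintro ⟨f, f1⟩
    refine ⟨fun i => f ((span ℝ {e}).mkQ (w i)), 0, ⟨f ∘ₗ (span ℝ {e}).mkQ, fun _ => rfl, ?_⟩,
      rfl, f1⟩
    have : (span ℝ {e}).mkQ e = 0 := by
      rw [← LinearMap.mem_ker, Submodule.ker_mkQ]; exact Submodule.mem_span_singleton_self _
    rw [LinearMap.comp_apply, this, map_zero]
  · rintro ⟨c, t, ⟨f, f1, f2⟩, rfl, c2⟩
    obtain rfl : (fun i => f (w i)) = c := funext f1
    refine ⟨(span ℝ {e}).liftQ f ?_, ?_⟩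
    · rw [Submodule.span_le]; simpa using f2
    · simpa using c2

lemma s16_D_last (w : Fin (n + 1) → V) : ODualActive w (Fin.last n) ↔
    w (Fin.last n) ∉ span ℝ (Set.range (w ∘ Fin.castSucc)) := by
  constructor
  · rintro ⟨f, -, f2, f3⟩ h
    have : span ℝ (Set.range (w ∘ Fin.castSucc)) ≤ LinearMap.ker f := by
      rw [Submodule.span_le]
      rintro _ ⟨i, rfl⟩
      exact f3 _ (Fin.castSucc_lt_last i)
    exact f2.ne' (this h)
  · intro h
    obtain ⟨f, f1, f2⟩ := Submodule.exists_le_ker_of_notMem h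
    have hz : ∀ i : Fin n, f (w i.castSucc) = 0 := fun i =>
      f2 (Submodule.subset_span ⟨i, rfl⟩)
    have main : ∀ g : V →ₗ[ℝ] ℝ, (∀ i : Fin n, g (w i.castSucc) = 0) → 0 < g (w (Fin.last n)) →
        ODualActive w (Fin.last n) := by
      intro g g1 g2
      refine ⟨g, ?_, g2, ?_⟩
      · intro i; refine Fin.lastCases ?_ (fun j => ?_) i
        · exact g2.le
        · exact (g1 j).ge
      · intro i; refine Fin.lastCases ?_ (fun j => ?_) i
        · intro h; exact absurd h (lt_irrefl _)
        · intro _; exact g1 j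
    rcases lt_or_gt_of_ne f1 with h | h
    · exact main (-f) (by simp [hz]) (by simpa using h)
    · exact main f hz h

lemma s16_reorient_map (v : Fin (n + 1) → V) (A : Finset (Fin n)) :
    reorient v (A.map Fin.castSuccEmb) =
      Fin.snoc (reorient (v ∘ Fin.castSucc) A) (v (Fin.last n)) := by
  funext i; refine Fin.lastCases ?_ (fun j => ?_) i <;> simp [reorient]

lemma s16_reorient_insert (v : Fin (n + 1) → V) (A : Finset (Fin n)) :
    reorient v (insert (Fin.last n) (A.map Fin.castSuccEmb)) =
      Fin.snoc (reorient (v ∘ Fin.castSucc) A) (-v (Fin.last n)) := by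
  funext i; refine Fin.lastCases ?_ (fun j => ?_) i <;> simp [reorient]

lemma s16_reorient_comp (v : Fin n → V) (π : V →ₗ[ℝ] W) (A : Finset (Fin n)) :
    reorient (π ∘ v) A = π ∘ reorient v A := by
  funext i; simp only [reorient, Function.comp_apply]; split_ifs <;> simp

end config

/-! ### Generating function -/

open Classical in
/-- weight of a set of active elements -/
noncomputable def s16Wt {n : ℕ} (P : Fin n → Prop) (A : Finset (Fin n)) (α β : ℝ) : ℝ :=
  ∏ a, if P a then (if a ∈ A then β else α) else 1

lemma s16Wt_eq {n : ℕ} (P : Fin n → Prop) (A : Finset (Fin n)) (α β : ℝ) :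
    s16Wt P A α β = α ^ {a | a ∉ A ∧ P a}.ncard * β ^ {a | a ∈ A ∧ P a}.ncard := by
  classical
  have h1 : ∀ Q : Fin n → Prop, ∀ γ : ℝ, γ ^ {a | Q a}.ncard = ∏ a, if Q a then γ else 1 := by
    intro Q γ
    rw [Set.ncard_eq_toFinset_card', Finset.prod_ite]
    simp
  rw [h1, h1, ← Finset.prod_mul_distrib, s16Wt]
  refine Finset.prod_congr rfl fun a _ => ?_
  by_cases hP : P a <;> by_cases hA : a ∈ A <;> simp [hP, hA]

open Classical in
lemma s16Wt_map {n : ℕ} (P : Fin (n + 1) → Prop) (A : Finset (Fin n)) (α β : ℝ) :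
    s16Wt P (A.map Fin.castSuccEmb) α β =
      s16Wt (fun a => P a.castSucc) A α β * (if P (Fin.last n) then α else 1) := by
  simp [s16Wt, Fin.prod_univ_castSucc]

open Classical in
lemma s16Wt_insert {n : ℕ} (P : Fin (n + 1) → Prop) (A : Finset (Fin n)) (α β : ℝ) :
    s16Wt P (insert (Fin.last n) (A.map Fin.castSuccEmb)) α β =
      s16Wt (fun a => P a.castSucc) A α β * (if P (Fin.last n) then β else 1) := by
  simp [s16Wt, Fin.prod_univ_castSucc]

lemma s16Wt_congr {n : ℕ} {P Q : Fin n → Prop} (h : ∀ a, P a ↔ Q a) (A : Finset (Fin n))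
    (α β : ℝ) : s16Wt P A α β = s16Wt Q A α β := by
  rw [show P = Q from funext fun a => propext (h a)]

/-- the monomial of a reorientation -/
noncomputable def s16Gen {n : ℕ} {V W : Type*} [AddCommGroup V] [Module ℝ V]
    [AddCommGroup W] [Module ℝ W] (v : Fin n → V) (v' : Fin n → W) (A : Finset (Fin n))
    (x u y s : ℝ) : ℝ :=
  s16Wt (ODualActive (reorient v' A)) A x u * s16Wt (OActive (reorient v A)) A y s

section step
variable {n : ℕ} {V W : Type*} [AddCommGroup V] [Module ℝ V]
    [AddCommGroup W] [Module ℝ W]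

lemma s16_span_reorient (v : Fin n → V) (A : Finset (Fin n)) :
    span ℝ (Set.range (reorient v A)) = span ℝ (Set.range v) := by
  apply le_antisymm <;> rw [Submodule.span_le] <;> rintro _ ⟨i, rfl⟩
  · have h : v i ∈ span ℝ (Set.range v) := Submodule.subset_span ⟨i, rfl⟩
    unfold reorient
    split_ifs
    · exact neg_mem h
    · exact h
  · have h : reorient v A i ∈ span ℝ (Set.range (reorient v A)) := Submodule.subset_span ⟨i, rfl⟩
    by_cases hi : i ∈ A
    · have := neg_mem h
      simpa [reorient, hi] using this
    · simpa [reorient, hi] using h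

lemma s16_snoc_comp (w : Fin n → V) (e : V) :
    (Fin.snoc w e : Fin (n + 1) → V) ∘ Fin.castSucc = w := by
  funext i; simp

lemma s16_con_reorient (v : Fin (n + 1) → V) (A : Finset (Fin n)) :
    reorient (s16Con v) A =
      (span ℝ {v (Fin.last n)}).mkQ ∘ reorient (v ∘ Fin.castSucc) A :=
  s16_reorient_comp _ _ _

open Classical in
lemma s16_step (v : Fin (n + 1) → V) (π : V →ₗ[ℝ] W) (A : Finset (Fin n)) (x u y s : ℝ) :
    ∃ G H : ℝ, ((G = s16Gen (v ∘ Fin.castSucc) (π ∘ v ∘ Fin.castSucc) A x u y s ∧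
        H = s16Gen (s16Con v) (s16Con (π ∘ v)) A x u y s) ∨
      (H = s16Gen (v ∘ Fin.castSucc) (π ∘ v ∘ Fin.castSucc) A x u y s ∧
        G = s16Gen (s16Con v) (s16Con (π ∘ v)) A x u y s)) ∧
      s16Gen v (π ∘ v) (A.map Fin.castSuccEmb) x u y s =
        G * (if π (v (Fin.last n)) ∉ span ℝ (Set.range (π ∘ v ∘ Fin.castSucc)) then x else 1) *
          (if v (Fin.last n) = 0 then y else 1) ∧
      s16Gen v (π ∘ v) (insert (Fin.last n) (A.map Fin.castSuccEmb)) x u y s =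
        H * (if π (v (Fin.last n)) ∉ span ℝ (Set.range (π ∘ v ∘ Fin.castSucc)) then u else 1) *
          (if v (Fin.last n) = 0 then s else 1) := by
  set w := reorient (v ∘ Fin.castSucc) A with hw
  set e := v (Fin.last n) with he
  have hw' : reorient ((π ∘ v) ∘ Fin.castSucc) A = π ∘ w := s16_reorient_comp (v ∘ Fin.castSucc) π A
  have hspan : span ℝ (Set.range (π ∘ w)) = span ℝ (Set.range (π ∘ v ∘ Fin.castSucc)) := by
    rw [← hw', s16_span_reorient]; rfl
  have core := s16_core (s16K_cone w e) (s16L_cone (π ∘ w) (π e)) (s16_orth w e π)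
  have g0 : s16Gen (v ∘ Fin.castSucc) (π ∘ v ∘ Fin.castSucc) A x u y s =
      s16Wt (s16Act (s16L (π ∘ w) (π e)) (fun _ => True)) A x u *
        s16Wt (s16Act (s16K w e) (· = 0)) A y s := by
    unfold s16Gen
    rw [← hw, show reorient (π ∘ v ∘ Fin.castSucc) A = π ∘ w from hw',
      s16Wt_congr (s16_D_del (π ∘ w) (π e)), s16Wt_congr (s16_O_del w e)]
  have g1 : s16Gen (s16Con v) (s16Con (π ∘ v)) A x u y s =
      s16Wt (s16Act (s16L (π ∘ w) (π e)) (· = 0)) A x u *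
        s16Wt (s16Act (s16K w e) (fun _ => True)) A y s := by
    unfold s16Gen
    rw [s16_con_reorient, s16_con_reorient, hw', ← hw, ← s16Wt_congr (s16_D_con (π ∘ w) (π e)),
      ← s16Wt_congr (s16_O_con w e)]
    rfl
  have gp : s16Gen v (π ∘ v) (A.map Fin.castSuccEmb) x u y s =
      (s16Wt (s16Act (s16L (π ∘ w) (π e)) (0 ≤ ·)) A x u *
        s16Wt (s16Act (s16K w e) (0 ≤ ·)) A y s) *
        (if π e ∉ span ℝ (Set.range (π ∘ v ∘ Fin.castSucc)) then x else 1) *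
          (if e = 0 then y else 1) := by
    unfold s16Gen
    rw [s16_reorient_map, s16_reorient_map, s16Wt_map, s16Wt_map, hw', ← hw, ← he,
      show (π ∘ v) (Fin.last n) = π e from rfl]
    simp only [s16_D_last, s16_O_last, Fin.snoc_last, s16_snoc_comp, hspan]
    rw [s16Wt_congr (s16_D_snoc (π ∘ w) (π e)), s16Wt_congr (s16_O_snoc w e)]
    ring
  have gm : s16Gen v (π ∘ v) (insert (Fin.last n) (A.map Fin.castSuccEmb)) x u y s =
      (s16Wt (s16Act (s16L (π ∘ w) (π e)) (· ≤ 0)) A x u *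
        s16Wt (s16Act (s16K w e) (· ≤ 0)) A y s) *
        (if π e ∉ span ℝ (Set.range (π ∘ v ∘ Fin.castSucc)) then u else 1) *
          (if e = 0 then s else 1) := by
    unfold s16Gen
    rw [s16_reorient_insert, s16_reorient_insert, s16Wt_insert, s16Wt_insert, hw', ← hw, ← he,
      show (π ∘ v) (Fin.last n) = π e from rfl]
    simp only [s16_D_last, s16_O_last, Fin.snoc_last, s16_snoc_comp, hspan, neg_mem_iff,
      neg_eq_zero]
    rw [s16Wt_congr (s16_D_snoc_neg (π ∘ w) (π e)), s16Wt_congr (s16_O_snoc_neg w e)]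
    ring
  refine ⟨_, _, ?_, gp, gm⟩
  rw [g0, g1]
  rcases core with ⟨hK, hL⟩ | ⟨hK, hL⟩
  · right
    rw [s16Wt_congr fun a => (hK a).1, s16Wt_congr fun a => (hK a).2,
      s16Wt_congr fun a => (hL a).1, s16Wt_congr fun a => (hL a).2]
    exact ⟨rfl, rfl⟩
  · left
    rw [s16Wt_congr fun a => (hK a).1, s16Wt_congr fun a => (hK a).2,
      s16Wt_congr fun a => (hL a).1, s16Wt_congr fun a => (hL a).2]
    exact ⟨rfl, rfl⟩

lemma s16_gen_loop (v : Fin (n + 1) → V) (π : V →ₗ[ℝ] W) (A : Finset (Fin n)) (x u y s : ℝ)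
    (h : v (Fin.last n) = 0) :
    s16Gen (s16Con v) (s16Con (π ∘ v)) A x u y s =
      s16Gen (v ∘ Fin.castSucc) (π ∘ v ∘ Fin.castSucc) A x u y s := by
  have h' : (π ∘ v) (Fin.last n) = 0 := by simp [h]
  unfold s16Gen
  rw [s16_con_reorient, s16_con_reorient]
  congr 1
  · refine s16Wt_congr (fun a => ?_) _ _ _
    rw [s16_D_con, s16_D_del _ ((π ∘ v) (Fin.last n))]
    refine ⟨fun k => s16Act_mono k fun _ _ => trivial, ?_⟩
    rintro ⟨c, t, ⟨f, f1, f2⟩, -, c2⟩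
    exact ⟨c, t, ⟨f, f1, f2⟩, by rw [← f2, h', map_zero], c2⟩
  · refine s16Wt_congr (fun a => ?_) _ _ _
    rw [s16_O_con, s16_O_del _ (v (Fin.last n))]
    refine ⟨?_, fun k => s16Act_mono k fun _ _ => trivial⟩
    rintro ⟨c, t, c1, -, c2⟩
    refine ⟨c, 0, ?_, rfl, c2⟩
    simpa [s16K, h] using c1

lemma s16_gen_coloop (v : Fin (n + 1) → V) (π : V →ₗ[ℝ] W) (A : Finset (Fin n)) (x u y s : ℝ)
    (h : π (v (Fin.last n)) ∉ span ℝ (Set.range (π ∘ v ∘ Fin.castSucc))) :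
    s16Gen (v ∘ Fin.castSucc) (π ∘ v ∘ Fin.castSucc) A x u y s =
      s16Gen (s16Con v) (s16Con (π ∘ v)) A x u y s := by
  obtain ⟨f, f1, f2⟩ := Submodule.exists_le_ker_of_notMem h
  have hz : ∀ i, f (reorient (π ∘ v ∘ Fin.castSucc) A i) = 0 := fun i => by
    have : reorient (π ∘ v ∘ Fin.castSucc) A i ∈
        span ℝ (Set.range (reorient (π ∘ v ∘ Fin.castSucc) A)) := Submodule.subset_span ⟨i, rfl⟩
    rw [s16_span_reorient] at this
    exact f2 this
  unfold s16Gen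
  rw [s16_con_reorient, s16_con_reorient]
  congr 1
  · refine s16Wt_congr (fun a => ?_) _ _ _
    rw [s16_D_con, s16_D_del _ ((π ∘ v) (Fin.last n))]
    refine ⟨?_, fun k => s16Act_mono k fun _ _ => trivial⟩
    rintro ⟨c, t, ⟨g, g1, g2⟩, -, c2⟩
    refine ⟨c, 0, ⟨g - (t / f (π (v (Fin.last n)))) • f, fun i => ?_, ?_⟩, rfl, c2⟩
    · have h4 := g1 i
      change g (reorient ((π ∘ v) ∘ Fin.castSucc) A i) = c i at h4
      have h3 := hz i
      change f (reorient ((π ∘ v) ∘ Fin.castSucc) A i) = 0 at h3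
      simp [h4, h3]
    · rw [LinearMap.sub_apply, g2, LinearMap.smul_apply, smul_eq_mul]
      simp only [Function.comp_apply]
      field_simp
      ring
  · refine s16Wt_congr (fun a => ?_) _ _ _
    rw [s16_O_con, s16_O_del _ (v (Fin.last n))]
    refine ⟨fun k => s16Act_mono k fun _ _ => trivial, ?_⟩
    rintro ⟨c, t, c1, -, c2⟩
    refine ⟨c, t, c1, ?_, c2⟩
    have := s16_orth _ _ π c t (fun _ => 0) (f (π (v (Fin.last n)))) c1
      ⟨f, fun i => by rw [← s16_reorient_comp]; exact hz i, rfl⟩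
    simpa [f1] using this

end step

theorem s16_key : ∀ (n : ℕ) {V W : Type*} [AddCommGroup V] [Module ℝ V] [FiniteDimensional ℝ V]
    [AddCommGroup W] [Module ℝ W] [FiniteDimensional ℝ W]
    (v : Fin n → V) (π : V →ₗ[ℝ] W) (x u y s : ℝ),
    tuttePerspV v (π ∘ v) (x + u) (y + s) = ∑ A, s16Gen v (π ∘ v) A x u y s := by
  classical
  intro n
  induction n with
  | zero =>
    intro V W _ _ _ _ _ _ v π x u y s
    have hu : (Set.univ : Set (Fin 0)) = ∅ := Set.eq_empty_of_isEmpty _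
    have hd : (default : Finset (Fin 0)) = ∅ := Subsingleton.elim _ _
    simp [tuttePerspV, s16Gen, s16Wt, hu, hd]
  | succ n ih =>
    intro V W _ _ _ _ _ _ v π x u y s
    have ih0 := ih (v ∘ Fin.castSucc) π x u y s
    have hle : span ℝ {v (Fin.last n)} ≤ (span ℝ {(π ∘ v) (Fin.last n)}).comap π := by
      rw [Submodule.span_le]
      simpa using Submodule.mem_span_singleton_self (π (v (Fin.last n)))
    have ih1 := ih (s16Con v) (Submodule.mapQ _ _ π hle) x u y s
    have hcon : (Submodule.mapQ _ _ π hle) ∘ s16Con v = s16Con (π ∘ v) := by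
      funext i; simp [s16Con]
    rw [hcon] at ih1
    rw [s16_sum_split]
    by_cases hl : v (Fin.last n) = 0
    · rw [s16_tutte_loop v (π ∘ v) _ _ hl (by simp [hl])]
      change (y + s) * tuttePerspV (v ∘ Fin.castSucc) (π ∘ v ∘ Fin.castSucc) _ _ = _
      rw [ih0, Finset.mul_sum]
      refine Finset.sum_congr rfl fun A _ => ?_
      have hnc : ¬ (π (v (Fin.last n)) ∉ span ℝ (Set.range (π ∘ v ∘ Fin.castSucc))) := by
        simp [hl]
      obtain ⟨G, H, h1, h2, h3⟩ := s16_step v π A x u y s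
      rw [s16_gen_loop v π A x u y s hl] at h1
      rw [h2, h3, if_neg hnc, if_neg hnc, if_pos hl, if_pos hl]
      rcases h1 with ⟨rfl, rfl⟩ | ⟨rfl, rfl⟩ <;> ring
    · by_cases hc : π (v (Fin.last n)) ∉ span ℝ (Set.range (π ∘ v ∘ Fin.castSucc))
      · have hc0 : v (Fin.last n) ∉ span ℝ (Set.range (v ∘ Fin.castSucc)) := by
          intro h
          apply hc
          rw [Set.range_comp, ← Submodule.map_span]
          exact Submodule.mem_map_of_mem h
        rw [s16_tutte_coloop v (π ∘ v) _ _ hc0 hc, ih1, Finset.mul_sum]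
        refine Finset.sum_congr rfl fun A _ => ?_
        obtain ⟨G, H, h1, h2, h3⟩ := s16_step v π A x u y s
        rw [s16_gen_coloop v π A x u y s hc] at h1
        rw [h2, h3, if_pos hc, if_pos hc, if_neg hl, if_neg hl]
        rcases h1 with ⟨rfl, rfl⟩ | ⟨rfl, rfl⟩ <;> ring
      · rw [s16_tutte_generic v (π ∘ v) _ _ hl (not_not.1 hc), ih1]
        change tuttePerspV (v ∘ Fin.castSucc) (π ∘ v ∘ Fin.castSucc) _ _ + _ = _
        rw [ih0, ← Finset.sum_add_distrib]
        refine Finset.sum_congr rfl fun A _ => ?_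
        obtain ⟨G, H, h1, h2, h3⟩ := s16_step v π A x u y s
        rw [h2, h3, if_neg hc, if_neg hc, if_neg hl, if_neg hl]
        rcases h1 with ⟨rfl, rfl⟩ | ⟨rfl, rfl⟩ <;> ring

/-- iterated derivative of a sum of shifted monomials at the base point -/
lemma s16_deriv {ι : Type*} (I : Finset ι) (k : ι → ℝ) (m : ι → ℕ) (q : ℕ) (y : ℝ) :
    iteratedDeriv q (fun y' => ∑ i ∈ I, k i * (y' - y) ^ m i) y =
      ∑ i ∈ I, k i * (if q = m i then (q.factorial : ℝ) else 0) := by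
  rw [iteratedDeriv_fun_sum (fun i _ => by fun_prop)]
  refine Finset.sum_congr rfl fun i _ => ?_
  rw [iteratedDeriv_const_mul_field, iteratedDeriv_comp_sub_const q (fun z : ℝ => z ^ m i) y]
  simp only [sub_self]
  rw [iteratedDeriv_fun_pow_zero]
  split_ifs with h
  · rw [h]
  · simp

/-- the iterated partial derivative `∂^{p+q} t / ∂x^p ∂y^q` of the two-variable
polynomial `t(M,M';x,y,1)` is the generating function
`p! · q! · ∑_{θ̄*_{M'}(A) = p, θ̄_M(A) = q} x^θ*_{M'}(A) y^θ_M(A)`. -/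
theorem statement16 {n : ℕ} {V W : Type*} [AddCommGroup V] [Module ℝ V] [FiniteDimensional ℝ V]
    [AddCommGroup W] [Module ℝ W] [FiniteDimensional ℝ W]
    (v : Fin n → V) (π : V →ₗ[ℝ] W) (p q : ℕ) (x y : ℝ) :
    iteratedDeriv p (fun x' => iteratedDeriv q (fun y' => tuttePerspV v (π ∘ v) x' y') y) x =
      (p.factorial : ℝ) * (q.factorial : ℝ) *
        ∑ A ∈ Finset.univ.filter
          (fun A : Finset (Fin n) => thetaStarBar (π ∘ v) A = p ∧ thetaBar v A = q),
          x ^ thetaStar (π ∘ v) A * y ^ theta v A := by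
  have key : ∀ x' y', tuttePerspV v (π ∘ v) x' y' = ∑ A : Finset (Fin n),
      (x ^ thetaStar (π ∘ v) A * (x' - x) ^ thetaStarBar (π ∘ v) A * y ^ theta v A) *
        (y' - y) ^ thetaBar v A := by
    intro x' y'
    have h := s16_key n v π x (x' - x) y (y' - y)
    rw [add_sub_cancel, add_sub_cancel] at h
    rw [h]
    refine Finset.sum_congr rfl fun A _ => ?_
    rw [s16Gen, s16Wt_eq, s16Wt_eq]
    simp only [thetaStar, thetaStarBar, theta, thetaBar]
    ring
  simp only [key, s16_deriv]
  have h2 : ∀ x' : ℝ, ∑ A : Finset (Fin n),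
      (x ^ thetaStar (π ∘ v) A * (x' - x) ^ thetaStarBar (π ∘ v) A * y ^ theta v A) *
        (if q = thetaBar v A then (q.factorial : ℝ) else 0) = ∑ A : Finset (Fin n),
      (x ^ thetaStar (π ∘ v) A * y ^ theta v A *
        (if q = thetaBar v A then (q.factorial : ℝ) else 0)) *
        (x' - x) ^ thetaStarBar (π ∘ v) A := by
    intro x'
    refine Finset.sum_congr rfl fun A _ => ?_
    ring
  simp only [h2, s16_deriv]
  rw [Finset.sum_filter, Finset.mul_sum]
  refine Finset.sum_congr rfl fun A _ => ?_
  simp only [@eq_comm _ p, @eq_comm _ q]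
  by_cases hp : thetaStarBar (π ∘ v) A = p <;> by_cases hq : thetaBar v A = q
  · simp only [hp, hq, and_self, if_true]; ring
  · simp [hq]
  · simp [hp]
  · simp [hp]
end

section
/- (Diagonal derivatives of the Tutte polynomial, realizable case.) For every vector configuration v : Fin n → V, every linear map π : V →ₗ[ℝ] W with v' = π ∘ v, every natural number p, and all real x: the p-th derivative d^p/dx^p of the one-variable polynomial x ↦ t(M,M';x,x,1), evaluated at x, equals p! · ∑_{A ⊆ Fin n with θ̄*_{M'}(A) + θ̄_M(A) = p} x^{θ*_{M'}(A) + θ_M(A)}. -/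
open Set Submodule

namespace Persp

/-- Sign attached to a Boolean. -/
noncomputable def sg (b : Bool) : ℝ := if b then -1 else 1

def Act {n : ℕ} (K : Submodule ℝ (Fin n → ℝ)) (σ : Fin n → Bool) (a : Fin n) : Prop :=
  ∃ c ∈ K, (∀ i, 0 ≤ sg (σ i) * c i) ∧ c a ≠ 0 ∧ ∀ i < a, c i = 0

def initL (n : ℕ) : (Fin (n+1) → ℝ) →ₗ[ℝ] (Fin n → ℝ) := LinearMap.funLeft ℝ ℝ Fin.castSucc

@[simp] lemma initL_apply {n : ℕ} (c : Fin (n+1) → ℝ) (i : Fin n) :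
    initL n c i = c i.castSucc := rfl

def lastZ (n : ℕ) : Submodule ℝ (Fin (n+1) → ℝ) := LinearMap.ker (LinearMap.proj (Fin.last n))

@[simp] lemma mem_lastZ {n : ℕ} (c : Fin (n+1) → ℝ) : c ∈ lastZ n ↔ c (Fin.last n) = 0 := Iff.rfl

def con {n : ℕ} (K : Submodule ℝ (Fin (n+1) → ℝ)) : Submodule ℝ (Fin n → ℝ) := K.map (initL n)
def del {n : ℕ} (K : Submodule ℝ (Fin (n+1) → ℝ)) : Submodule ℝ (Fin n → ℝ) :=
  (K ⊓ lastZ n).map (initL n)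

/-- vectors supported on `σ`. -/
def Z {n : ℕ} (σ : Fin n → Bool) : Submodule ℝ (Fin n → ℝ) where
  carrier := {c | ∀ i, σ i = false → c i = 0}
  add_mem' := by
    intro a b ha hb i hi
    simp [ha i hi, hb i hi]
  zero_mem' := by intro i hi; rfl
  smul_mem' := by
    intro r a ha i hi
    simp [ha i hi]

lemma mem_Z {n : ℕ} (σ : Fin n → Bool) (c : Fin n → ℝ) :
    c ∈ Z σ ↔ ∀ i, σ i = false → c i = 0 := Iff.rfl

noncomputable def dd {n : ℕ} (K : Submodule ℝ (Fin n → ℝ)) (σ : Fin n → Bool) : ℕ :=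
  Module.finrank ℝ ↥(K ⊓ Z σ)

lemma rank_null {V W : Type*} [AddCommGroup V] [Module ℝ V] [FiniteDimensional ℝ V]
    [AddCommGroup W] [Module ℝ W] (f : V →ₗ[ℝ] W) (p : Submodule ℝ V) :
    Module.finrank ℝ ↥(p.map f) + Module.finrank ℝ ↥(p ⊓ LinearMap.ker f) =
      Module.finrank ℝ p := by
  have h := LinearMap.finrank_range_add_finrank_ker (f.domRestrict p)
  rw [LinearMap.range_domRestrict, LinearMap.ker_domRestrict] at h
  rw [← h]
  congr 1
  have e := (Submodule.equivSubtypeMap p ((LinearMap.ker f).comap p.subtype)).finrank_eq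
  rw [Submodule.map_comap_subtype] at e
  exact e.symm

open Classical in
noncomputable def eps {n : ℕ} (K : Submodule ℝ (Fin (n+1) → ℝ)) : ℕ :=
  if Pi.single (Fin.last n) 1 ∈ K then 1 else 0

lemma ext_last {n : ℕ} (c : Fin (n+1) → ℝ) (h : ∀ i : Fin n, c i.castSucc = 0) :
    c = c (Fin.last n) • Pi.single (Fin.last n) 1 := by
  ext i
  refine Fin.lastCases ?_ (fun j => ?_) i
  · simp
  · simp [h, Pi.single_apply, (Fin.castSucc_lt_last j).ne]

lemma dd_false {n : ℕ} (K : Submodule ℝ (Fin (n+1) → ℝ)) (σ : Fin n → Bool) (τ : Fin (n+1) → Bool)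
    (h1 : ∀ i : Fin n, τ i.castSucc = σ i) (h2 : τ (Fin.last n) = false) :
    dd K τ = dd (del K) σ := by
  unfold dd
  rw [← rank_null (initL n) (K ⊓ Z τ)]
  have h3 : (K ⊓ Z τ).map (initL n) = del K ⊓ Z σ := by
    ext d
    simp only [del, Submodule.mem_map, Submodule.mem_inf, mem_Z, mem_lastZ]
    constructor
    · rintro ⟨c, ⟨hc, hz⟩, rfl⟩
      exact ⟨⟨c, ⟨hc, hz _ h2⟩, rfl⟩, fun i hi => hz _ (by rw [h1, hi])⟩
    · rintro ⟨⟨c, ⟨hc, hl⟩, rfl⟩, hz⟩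
      refine ⟨c, ⟨hc, fun i => ?_⟩, rfl⟩
      refine Fin.lastCases (fun _ => hl) (fun j hj => ?_) i
      exact hz j (by rw [← h1, hj])
  have h4 : (K ⊓ Z τ) ⊓ LinearMap.ker (initL n) = ⊥ := by
    rw [eq_bot_iff]
    rintro c ⟨⟨hc, hz⟩, hk⟩
    have := ext_last c (fun i => congrFun (LinearMap.mem_ker.1 hk) i)
    rw [hz _ h2, zero_smul] at this
    exact this
  rw [h3, h4, finrank_bot, add_zero]

lemma dd_true {n : ℕ} (K : Submodule ℝ (Fin (n+1) → ℝ)) (σ : Fin n → Bool) (τ : Fin (n+1) → Bool)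
    (h1 : ∀ i : Fin n, τ i.castSucc = σ i) (h2 : τ (Fin.last n) = true) :
    dd K τ = dd (con K) σ + eps K := by
  unfold dd
  rw [← rank_null (initL n) (K ⊓ Z τ)]
  have h3 : (K ⊓ Z τ).map (initL n) = con K ⊓ Z σ := by
    ext d
    simp only [con, Submodule.mem_map, Submodule.mem_inf, mem_Z]
    constructor
    · rintro ⟨c, ⟨hc, hz⟩, rfl⟩
      exact ⟨⟨c, hc, rfl⟩, fun i hi => hz _ (by rw [h1, hi])⟩
    · rintro ⟨⟨c, hc, rfl⟩, hz⟩
      refine ⟨c, ⟨hc, fun i => ?_⟩, rfl⟩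
      refine Fin.lastCases (fun h => by simp [h2] at h) (fun j hj => ?_) i
      exact hz j (by rw [← h1, hj])
  rw [h3]
  congr 1
  unfold eps
  split_ifs with he
  · have h4 : (K ⊓ Z τ) ⊓ LinearMap.ker (initL n) = span ℝ {Pi.single (Fin.last n) 1} := by
      apply le_antisymm
      · rintro c ⟨⟨hc, hz⟩, hk⟩
        rw [ext_last c (fun i => congrFun (LinearMap.mem_ker.1 hk) i)]
        exact Submodule.smul_mem _ _ (Submodule.mem_span_singleton_self _)
      · rw [Submodule.span_singleton_le_iff_mem]
        refine ⟨⟨he, fun i => ?_⟩, ?_⟩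
        · refine Fin.lastCases (fun h => by simp [h2] at h) (fun j hj => ?_) i
          simp [Pi.single_apply, (Fin.castSucc_lt_last j).ne]
        · rw [SetLike.mem_coe, LinearMap.mem_ker]
          ext j
          simp [Pi.single_apply, (Fin.castSucc_lt_last j).ne]
    rw [h4]
    exact finrank_span_singleton (by simp)
  · have h4 : (K ⊓ Z τ) ⊓ LinearMap.ker (initL n) = ⊥ := by
      rw [eq_bot_iff]
      rintro c ⟨⟨hc, hz⟩, hk⟩
      have := ext_last c (fun i => congrFun (LinearMap.mem_ker.1 hk) i)
      by_cases hl : c (Fin.last n) = 0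
      · rw [hl, zero_smul] at this
        exact this
      · exfalso
        apply he
        have h5 : (Pi.single (Fin.last n) 1 : Fin (n+1) → ℝ) = (c (Fin.last n))⁻¹ • c := by
          conv_rhs => rw [this]
          simp [smul_smul, hl]
        rw [h5]
        exact K.smul_mem _ hc
    rw [h4, finrank_bot]

/-! Activities -/

lemma act_con {n : ℕ} (K : Submodule ℝ (Fin (n+1) → ℝ)) (σ : Fin n → Bool) (a : Fin n) :
    Act (con K) σ a ↔ ∃ c ∈ K, (∀ i : Fin n, 0 ≤ sg (σ i) * c i.castSucc) ∧
      c a.castSucc ≠ 0 ∧ ∀ i < a, c i.castSucc = 0 := by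
  constructor
  · rintro ⟨_, ⟨c, hc, rfl⟩, h⟩
    exact ⟨c, hc, h⟩
  · rintro ⟨c, hc, h⟩
    exact ⟨_, ⟨c, hc, rfl⟩, h⟩

lemma act_del {n : ℕ} (K : Submodule ℝ (Fin (n+1) → ℝ)) (σ : Fin n → Bool) (a : Fin n) :
    Act (del K) σ a ↔ ∃ c ∈ K, c (Fin.last n) = 0 ∧ (∀ i : Fin n, 0 ≤ sg (σ i) * c i.castSucc) ∧
      c a.castSucc ≠ 0 ∧ ∀ i < a, c i.castSucc = 0 := by
  constructor
  · rintro ⟨_, ⟨c, ⟨hc, hl⟩, rfl⟩, h⟩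
    exact ⟨c, hc, hl, h⟩
  · rintro ⟨c, hc, hl, h⟩
    exact ⟨_, ⟨c, ⟨hc, hl⟩, rfl⟩, h⟩

abbrev sn {n : ℕ} (σ : Fin n → Bool) (b : Bool) : Fin (n+1) → Bool :=
  Fin.snoc (α := fun _ => Bool) σ b

lemma act_snoc {n : ℕ} (K : Submodule ℝ (Fin (n+1) → ℝ)) (σ : Fin n → Bool) (b : Bool)
    (a : Fin n) :
    Act K (sn σ b) a.castSucc ↔ ∃ c ∈ K, 0 ≤ sg b * c (Fin.last n) ∧
      (∀ i : Fin n, 0 ≤ sg (σ i) * c i.castSucc) ∧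
      c a.castSucc ≠ 0 ∧ ∀ i < a, c i.castSucc = 0 := by
  constructor
  · rintro ⟨c, hc, h1, h2, h3⟩
    refine ⟨c, hc, ?_, fun i => ?_, h2, fun i hi => h3 _ (by simpa using hi)⟩
    · simpa [sn] using h1 (Fin.last n)
    · simpa [sn] using h1 i.castSucc
  · rintro ⟨c, hc, hl, h1, h2, h3⟩
    refine ⟨c, hc, fun i => ?_, h2, fun i => ?_⟩
    · refine Fin.lastCases ?_ (fun j => ?_) i
      · simpa [sn] using hl
      · simpa [sn] using h1 j
    · refine Fin.lastCases (fun h => ?_) (fun j hj => h3 j (by simpa using hj)) i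
      exact absurd h (not_lt.2 (Fin.le_last _))

lemma act_last {n : ℕ} (K : Submodule ℝ (Fin (n+1) → ℝ)) (σ : Fin (n+1) → Bool) :
    Act K σ (Fin.last n) ↔ Pi.single (Fin.last n) 1 ∈ K := by
  constructor
  · rintro ⟨c, hc, -, h2, h3⟩
    have := ext_last c (fun i => h3 _ (Fin.castSucc_lt_last i))
    have h5 : (Pi.single (Fin.last n) 1 : Fin (n+1) → ℝ) = (c (Fin.last n))⁻¹ • c := by
      conv_rhs => rw [this]
      simp [smul_smul, h2]
    rw [h5]
    exact K.smul_mem _ hc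
  · intro h
    refine ⟨sg (σ (Fin.last n)) • Pi.single (Fin.last n) 1, K.smul_mem _ h, fun i => ?_, ?_, ?_⟩
    · refine Fin.lastCases ?_ (fun j => ?_) i
      · simpa using mul_self_nonneg _
      · simp [Pi.single_apply, (Fin.castSucc_lt_last j).ne]
    · cases σ (Fin.last n) <;> simp [sg]
    · intro i hi
      simp [Pi.single_apply, hi.ne]

lemma sg_mul_pos {σ : Bool} {x : ℝ} (h : 0 ≤ sg σ * x) (hx : x ≠ 0) :
    0 < sg σ * x := lt_of_le_of_ne h (by
      have : sg σ ≠ 0 := by cases σ <;> simp [sg]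
      exact (mul_ne_zero this hx).symm)

lemma combine {n : ℕ} (K : Submodule ℝ (Fin (n+1) → ℝ)) (σ : Fin n → Bool) (a b : Fin n)
    (ha : Act K (sn σ false) a.castSucc) (hb : Act K (sn σ true) b.castSucc) :
    Act (del K) σ a ∨ Act (del K) σ b := by
  rw [act_snoc] at ha hb
  rw [act_del, act_del]
  obtain ⟨c, hc, hl, h1, h2, h3⟩ := ha
  obtain ⟨c', hc', hl', h1', h2', h3'⟩ := hb
  simp only [sg, Bool.false_eq_true, if_false, if_true, one_mul, neg_mul] at hl hl'
  by_cases e : c (Fin.last n) = 0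
  · exact Or.inl ⟨c, hc, e, h1, h2, h3⟩
  by_cases e' : c' (Fin.last n) = 0
  · exact Or.inr ⟨c', hc', e', h1', h2', h3'⟩
  have p : 0 < c (Fin.last n) := lt_of_le_of_ne hl (Ne.symm e)
  have p' : 0 < -c' (Fin.last n) := lt_of_le_of_ne hl' (Ne.symm (by simpa using e'))
  set r := c (Fin.last n)
  set r' := -c' (Fin.last n) with hr'
  have hd : r' • c + r • c' ∈ K := K.add_mem (K.smul_mem _ hc) (K.smul_mem _ hc')
  have hdl : (r' • c + r • c') (Fin.last n) = 0 := by
    simp [hr', r]; ring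
  have hs : ∀ i : Fin n, 0 ≤ sg (σ i) * (r' • c + r • c') i.castSucc := by
    intro i
    have e : sg (σ i) * (r' • c + r • c') i.castSucc =
      r' * (sg (σ i) * c i.castSucc) + r * (sg (σ i) * c' i.castSucc) := by
      simp; ring
    rw [e]
    have := h1 i
    have := h1' i
    positivity
  have hne : ∀ i : Fin n, (c i.castSucc ≠ 0 ∨ c' i.castSucc ≠ 0) →
      (r' • c + r • c') i.castSucc ≠ 0 := by
    intro i hi h0
    have e : sg (σ i) * (r' • c + r • c') i.castSucc =
      r' * (sg (σ i) * c i.castSucc) + r * (sg (σ i) * c' i.castSucc) := by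
      simp; ring
    rw [h0, mul_zero] at e
    have q := h1 i
    have q' := h1' i
    rcases hi with hi | hi
    · have := sg_mul_pos q hi
      have : 0 < r' * (sg (σ i) * c i.castSucc) + r * (sg (σ i) * c' i.castSucc) := by positivity
      linarith
    · have := sg_mul_pos q' hi
      have : 0 < r' * (sg (σ i) * c i.castSucc) + r * (sg (σ i) * c' i.castSucc) := by positivity
      linarith
  rcases le_total a b with hab | hab
  · left
    refine ⟨_, hd, hdl, hs, hne a (Or.inl h2), fun i hi => ?_⟩
    simp [h3 i hi, h3' i (hi.trans_le hab)]
  · right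
    refine ⟨_, hd, hdl, hs, hne b (Or.inr h2'), fun i hi => ?_⟩
    simp [h3' i hi, h3 i (hi.trans_le hab)]

lemma del_snoc {n : ℕ} (K : Submodule ℝ (Fin (n+1) → ℝ)) (σ : Fin n → Bool) (b : Bool) (a : Fin n)
    (h : Act (del K) σ a) : Act K (sn σ b) a.castSucc := by
  rw [act_del] at h
  rw [act_snoc]
  obtain ⟨c, hc, hl, h⟩ := h
  exact ⟨c, hc, by simp [hl], h⟩

lemma con_iff {n : ℕ} (K : Submodule ℝ (Fin (n+1) → ℝ)) (σ : Fin n → Bool) (a : Fin n) :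
    Act (con K) σ a ↔ Act K (sn σ false) a.castSucc ∨ Act K (sn σ true) a.castSucc := by
  rw [act_con, act_snoc, act_snoc]
  constructor
  · rintro ⟨c, hc, h⟩
    rcases le_total 0 (c (Fin.last n)) with hl | hl
    · exact Or.inl ⟨c, hc, by simpa [sg] using hl, h⟩
    · exact Or.inr ⟨c, hc, by simpa [sg] using hl, h⟩
  · rintro (⟨c, hc, -, h⟩ | ⟨c, hc, -, h⟩) <;> exact ⟨c, hc, h⟩

lemma nested {n : ℕ} (K : Submodule ℝ (Fin (n+1) → ℝ)) (σ : Fin n → Bool) :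
    ((∀ a : Fin n, Act K (sn σ false) a.castSucc ↔ Act (del K) σ a) ∧
      (∀ a : Fin n, Act K (sn σ true) a.castSucc ↔ Act (con K) σ a)) ∨
    ((∀ a : Fin n, Act K (sn σ false) a.castSucc ↔ Act (con K) σ a) ∧
      (∀ a : Fin n, Act K (sn σ true) a.castSucc ↔ Act (del K) σ a)) := by
  have A := combine K σ
  have B := con_iff K σ
  have C0 := del_snoc K σ false
  have C1 := del_snoc K σ true
  by_cases h : ∀ a : Fin n, Act K (sn σ false) a.castSucc → Act (del K) σ a
  · left
    exact ⟨fun a => ⟨h a, C0 a⟩, fun a => ⟨fun q => (B a).2 (Or.inr q), fun q =>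
      ((B a).1 q).elim (fun q => C1 a (h a q)) id⟩⟩
  · right
    push Not at h
    obtain ⟨a, h1, h2⟩ := h
    have h' : ∀ b : Fin n, Act K (sn σ true) b.castSucc → Act (del K) σ b :=
      fun b hb => (A a b h1 hb).resolve_left h2
    exact ⟨fun a => ⟨fun q => (B a).2 (Or.inl q), fun q =>
      ((B a).1 q).elim id (fun q => C0 a (h' a q))⟩, fun a => ⟨h' a, C1 a⟩⟩

def Orth {n : ℕ} (K L : Submodule ℝ (Fin n → ℝ)) : Prop :=
  ∀ c ∈ K, ∀ l ∈ L, ∑ i, c i * l i = 0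

lemma Orth.symm {n : ℕ} {K L : Submodule ℝ (Fin n → ℝ)} (h : Orth K L) : Orth L K :=
  fun c hc l hl => by simpa [mul_comm] using h l hl c hc

lemma Orth.delcon {n : ℕ} {K L : Submodule ℝ (Fin (n+1) → ℝ)} (h : Orth K L) :
    Orth (del K) (con L) := by
  rintro _ ⟨c, ⟨hc, hz⟩, rfl⟩ _ ⟨l, hl, rfl⟩
  have := h c hc l hl
  rw [Fin.sum_univ_castSucc] at this
  have hz' : c (Fin.last n) = 0 := hz
  simpa [hz'] using this

lemma compat {n : ℕ} {K L : Submodule ℝ (Fin (n+1) → ℝ)} (h : Orth K L) (σ : Fin n → Bool)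
    (b : Bool) :
    (∀ a : Fin n, Act K (sn σ b) a.castSucc → Act (del K) σ a) ∨
    (∀ a : Fin n, Act L (sn σ b) a.castSucc → Act (del L) σ a) := by
  by_contra hcon
  push Not at hcon
  obtain ⟨⟨a, ha, ha'⟩, ⟨d, hd, hd'⟩⟩ := hcon
  rw [act_snoc] at ha hd
  rw [act_del] at ha' hd'
  obtain ⟨c, hc, hl, h1, h2⟩ := ha
  obtain ⟨c', hc', hl', h1', h2'⟩ := hd
  have e : c (Fin.last n) ≠ 0 := fun e => ha' ⟨c, hc, e, h1, h2⟩
  have e' : c' (Fin.last n) ≠ 0 := fun e => hd' ⟨c', hc', e, h1', h2'⟩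
  have p := sg_mul_pos hl e
  have p' := sg_mul_pos hl' e'
  have s := h c hc c' hc'
  rw [Fin.sum_univ_castSucc] at s
  have key : ∀ (t : Bool) (x y : ℝ), x * y = (sg t * x) * (sg t * y) := by
    intro t x y; cases t <;> simp [sg]
  have s1 : 0 ≤ ∑ i : Fin n, c i.castSucc * c' i.castSucc :=
    Finset.sum_nonneg fun i _ => by
      rw [key (σ i)]; exact mul_nonneg (h1 i) (h1' i)
  have s2 : 0 < c (Fin.last n) * c' (Fin.last n) := by
    rw [key b]; exact mul_pos p p'
  linarith

open Classical in
noncomputable def wt {n : ℕ} (x u : ℝ) (K : Submodule ℝ (Fin n → ℝ)) (σ : Fin n → Bool) : ℝ :=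
  ∏ a, if Act K σ a then (if σ a then u else x) else 1

noncomputable def FF {n : ℕ} (x u : ℝ) (K L : Submodule ℝ (Fin n → ℝ)) : ℝ :=
  ∑ σ, wt x u K σ * wt x u L σ

noncomputable def SS {n : ℕ} (X : ℝ) (K L : Submodule ℝ (Fin n → ℝ)) : ℝ :=
  ∑ σ, X ^ dd L (fun i => !σ i) * X ^ dd K σ

lemma sum_sn {n : ℕ} (f : (Fin (n+1) → Bool) → ℝ) :
    ∑ τ, f τ = ∑ σ : Fin n → Bool, (f (sn σ false) + f (sn σ true)) := by
  rw [← (Fin.snocEquiv (fun _ : Fin (n+1) => Bool)).sum_comp, Fintype.sum_prod_type,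
    Fintype.sum_bool, ← Finset.sum_add_distrib]
  refine Finset.sum_congr rfl fun σ _ => ?_
  rw [add_comm]; rfl

lemma SS_rec {n : ℕ} (X : ℝ) (K L : Submodule ℝ (Fin (n+1) → ℝ)) :
    SS X K L = X ^ eps L * SS X (del K) (con L) + X ^ eps K * SS X (con K) (del L) := by
  unfold SS
  rw [sum_sn, Finset.sum_add_distrib, Finset.mul_sum, Finset.mul_sum]
  congr 1
  · refine Finset.sum_congr rfl fun σ _ => ?_
    rw [dd_false K σ _ (by simp [sn]) (by simp [sn]),
      dd_true L (fun i => !σ i) _ (by simp [sn]) (by simp [sn]), pow_add]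
    ring
  · refine Finset.sum_congr rfl fun σ _ => ?_
    rw [dd_true K σ _ (by simp [sn]) (by simp [sn]),
      dd_false L (fun i => !σ i) _ (by simp [sn]) (by simp [sn]), pow_add]
    ring

lemma wt_congr {n : ℕ} (x u : ℝ) (K : Submodule ℝ (Fin (n+1) → ℝ)) (K' : Submodule ℝ (Fin n → ℝ))
    (σ : Fin n → Bool) (b : Bool) (h : ∀ a : Fin n, Act K (sn σ b) a.castSucc ↔ Act K' σ a) :
    wt x u K (sn σ b) = wt x u K' σ * (if b then u else x) ^ eps K := by
  unfold wt
  rw [Fin.prod_univ_castSucc]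
  congr 1
  · refine Finset.prod_congr rfl fun a _ => ?_
    classical
    refine if_congr (h a) ?_ rfl
    simp [sn]
  · unfold eps
    by_cases hK : Pi.single (Fin.last n) 1 ∈ K
    · rw [if_pos hK, if_pos ((act_last K _).2 hK)]
      simp [sn]
    · rw [if_neg hK, if_neg (fun q => hK ((act_last K _).1 q))]
      simp

lemma wt_eq {n : ℕ} (x u : ℝ) (K K' : Submodule ℝ (Fin n → ℝ))
    (σ : Fin n → Bool) (h : ∀ a : Fin n, Act K σ a ↔ Act K' σ a) :
    wt x u K σ = wt x u K' σ := by
  classical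
  unfold wt
  exact Finset.prod_congr rfl fun a _ => if_congr (h a) rfl rfl

lemma FF_comm {n : ℕ} (x u : ℝ) (K L : Submodule ℝ (Fin n → ℝ)) : FF x u K L = FF x u L K := by
  unfold FF
  simp [mul_comm]

lemma FF_rec_loop {n : ℕ} (x u : ℝ) (K L : Submodule ℝ (Fin (n+1) → ℝ)) (h : Orth K L)
    (hK : Pi.single (Fin.last n) 1 ∈ K) :
    FF x u K L = (x+u-1) ^ eps L * FF x u (del K) (con L)
      + (x+u-1) ^ eps K * FF x u (con K) (del L) := by
  have hL : ∀ l ∈ L, l (Fin.last n) = 0 := by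
    intro l hl
    have := h _ hK l hl
    simpa [Pi.single_apply] using this
  have hLe : eps L = 0 := by
    unfold eps
    rw [if_neg]
    intro hh
    have := hL _ hh
    simp at this
  have hKe : eps K = 1 := by
    unfold eps
    rw [if_pos hK]
  have hdL : del L = con L := by
    unfold del con
    congr 1
    exact inf_eq_left.2 (fun l hl => hL l hl)
  have hdK : del K = con K := by
    apply le_antisymm
    · exact Submodule.map_mono inf_le_left
    · rintro _ ⟨c, hc, rfl⟩
      refine ⟨c - c (Fin.last n) • Pi.single (Fin.last n) 1,
        ⟨K.sub_mem hc (K.smul_mem _ hK), ?_⟩, ?_⟩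
      · simp
      · ext j
        simp [Pi.single_apply, (Fin.castSucc_lt_last j).ne]
  have nK : ∀ (σ : Fin n → Bool) b (a : Fin n), Act K (sn σ b) a.castSucc ↔ Act (con K) σ a := by
    intro σ b a
    have A := con_iff K σ a
    have B := del_snoc K σ b a
    rw [hdK] at B
    refine ⟨fun q => A.2 ?_, B⟩
    cases b
    · exact Or.inl q
    · exact Or.inr q
  have nL : ∀ (σ : Fin n → Bool) b (a : Fin n), Act L (sn σ b) a.castSucc ↔ Act (con L) σ a := by
    intro σ b a
    have A := con_iff L σ a
    have B := del_snoc L σ b a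
    rw [hdL] at B
    refine ⟨fun q => A.2 ?_, B⟩
    cases b
    · exact Or.inl q
    · exact Or.inr q
  rw [hLe, hKe, hdL, hdK]
  unfold FF
  rw [sum_sn, Finset.mul_sum, Finset.mul_sum, ← Finset.sum_add_distrib]
  refine Finset.sum_congr rfl fun σ _ => ?_
  rw [wt_congr x u K _ σ false (nK σ false), wt_congr x u K _ σ true (nK σ true),
    wt_congr x u L _ σ false (nL σ false), wt_congr x u L _ σ true (nL σ true), hLe, hKe]
  simp
  ring

lemma FF_rec {n : ℕ} (x u : ℝ) (K L : Submodule ℝ (Fin (n+1) → ℝ)) (h : Orth K L) :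
    FF x u K L = (x+u-1) ^ eps L * FF x u (del K) (con L)
      + (x+u-1) ^ eps K * FF x u (con K) (del L) := by
  by_cases hK : Pi.single (Fin.last n) 1 ∈ K
  · exact FF_rec_loop x u K L h hK
  by_cases hL : Pi.single (Fin.last n) 1 ∈ L
  · rw [FF_comm, FF_rec_loop x u L K h.symm hL, FF_comm x u (del L), FF_comm x u (con L), add_comm]
  have hKe : eps K = 0 := by
    unfold eps
    rw [if_neg hK]
  have hLe : eps L = 0 := by
    unfold eps
    rw [if_neg hL]
  rw [hLe, hKe]
  unfold FF
  rw [sum_sn, Finset.mul_sum, Finset.mul_sum, ← Finset.sum_add_distrib]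
  refine Finset.sum_congr rfl fun σ _ => ?_
  have c0 := compat h σ false
  have c1 := compat h σ true
  rcases nested K σ with ⟨k0, k1⟩ | ⟨k0, k1⟩ <;> rcases nested L σ with ⟨l0, l1⟩ | ⟨l0, l1⟩ <;>
  rw [wt_congr x u K _ σ false k0, wt_congr x u K _ σ true k1,
    wt_congr x u L _ σ false l0, wt_congr x u L _ σ true l1, hLe, hKe] <;>
  simp only [pow_zero, one_mul, mul_one]
  · rcases c1 with c | c
    · have := wt_eq x u (con K) (del K) σ
        (fun a => ⟨fun q => c a ((k1 a).2 q), fun q => (k1 a).1 (del_snoc K σ true a q)⟩)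
      rw [this]; ring
    · have := wt_eq x u (con L) (del L) σ
        (fun a => ⟨fun q => c a ((l1 a).2 q), fun q => (l1 a).1 (del_snoc L σ true a q)⟩)
      rw [this]
  · ring
  · rcases c0 with c | c
    · have := wt_eq x u (con K) (del K) σ
        (fun a => ⟨fun q => c a ((k0 a).2 q), fun q => (k0 a).1 (del_snoc K σ false a q)⟩)
      rw [this]
    · have := wt_eq x u (con L) (del L) σ
        (fun a => ⟨fun q => c a ((l0 a).2 q), fun q => (l0 a).1 (del_snoc L σ false a q)⟩)
      rw [this]; ring

theorem main {n : ℕ} (x u : ℝ) (K L : Submodule ℝ (Fin n → ℝ)) (h : Orth K L) :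
    FF x u K L = SS (x+u-1) K L := by
  induction n with
  | zero =>
    have : ∀ (K : Submodule ℝ (Fin 0 → ℝ)) σ, dd K σ = 0 := by
      intro K σ
      unfold dd
      exact Module.finrank_zero_of_subsingleton
    simp [FF, SS, wt, this]
  | succ n ih =>
    rw [FF_rec x u K L h, SS_rec, ih _ _ h.delcon, ih _ _ h.symm.delcon.symm]

end Persp

namespace Persp

noncomputable def sgn {n : ℕ} (A : Finset (Fin n)) : Fin n → Bool := fun i => decide (i ∈ A)

/-- The space of linear dependences. -/
noncomputable def dep {n : ℕ} {V : Type*} [AddCommGroup V] [Module ℝ V] (v : Fin n → V) :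
    Submodule ℝ (Fin n → ℝ) := LinearMap.ker (Fintype.linearCombination ℝ v)

/-- Evaluation of functionals on the configuration. -/
noncomputable def evL {n : ℕ} {V : Type*} [AddCommGroup V] [Module ℝ V] (v : Fin n → V) :
    (Module.Dual ℝ V) →ₗ[ℝ] (Fin n → ℝ) := LinearMap.pi (fun i => Module.Dual.eval ℝ V (v i))

@[simp] lemma evL_apply {n : ℕ} {V : Type*} [AddCommGroup V] [Module ℝ V] (v : Fin n → V)
    (f : Module.Dual ℝ V) (i : Fin n) : evL v f i = f (v i) := rfl

lemma mem_dep {n : ℕ} {V : Type*} [AddCommGroup V] [Module ℝ V] (v : Fin n → V)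
    (c : Fin n → ℝ) : c ∈ dep v ↔ ∑ i, c i • v i = 0 := by
  simp [dep, Fintype.linearCombination_apply]

lemma orth {n : ℕ} {V W : Type*} [AddCommGroup V] [Module ℝ V] [AddCommGroup W] [Module ℝ W]
    (v : Fin n → V) (π : V →ₗ[ℝ] W) : Orth (dep v) (LinearMap.range (evL (π ∘ v))) := by
  rintro c hc _ ⟨f, rfl⟩
  rw [mem_dep] at hc
  have := congrArg (fun z => f (π z)) hc
  simpa [map_sum] using this

lemma sg_sq (b : Bool) : sg b * sg b = 1 := by cases b <;> simp [sg]

lemma sg_ne (b : Bool) : sg b ≠ 0 := by cases b <;> simp [sg]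

lemma reorient_eq {n : ℕ} {V : Type*} [AddCommGroup V] [Module ℝ V] (v : Fin n → V)
    (A : Finset (Fin n)) (i : Fin n) : reorient v A i = sg (sgn A i) • v i := by
  by_cases h : i ∈ A <;> simp [reorient, sg, sgn, h]

lemma oactive_iff {n : ℕ} {V : Type*} [AddCommGroup V] [Module ℝ V] (v : Fin n → V)
    (A : Finset (Fin n)) (a : Fin n) : OActive (reorient v A) a ↔ Act (dep v) (sgn A) a := by
  constructor
  · rintro ⟨c, h1, h2, h3, h4⟩
    refine ⟨fun i => sg (sgn A i) * c i, ?_, fun i => ?_, mul_ne_zero (sg_ne _) h3.ne',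
      fun i hi => by simp [h4 i hi]⟩
    · rw [mem_dep, ← h2]
      refine Finset.sum_congr rfl fun i _ => ?_
      rw [reorient_eq, smul_smul, mul_comm]
    · rw [← mul_assoc, sg_sq, one_mul]
      exact h1 i
  · rintro ⟨c, h1, h2, h3, h4⟩
    refine ⟨fun i => sg (sgn A i) * c i, h2, ?_, sg_mul_pos (h2 a) h3,
      fun i hi => by simp [h4 i hi]⟩
    rw [mem_dep] at h1
    rw [← h1]
    refine Finset.sum_congr rfl fun i _ => ?_
    rw [reorient_eq, smul_smul]
    congr 1
    rw [mul_comm, ← mul_assoc, sg_sq, one_mul]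

lemma odual_iff {n : ℕ} {V : Type*} [AddCommGroup V] [Module ℝ V] (v : Fin n → V)
    (A : Finset (Fin n)) (a : Fin n) :
    ODualActive (reorient v A) a ↔ Act (LinearMap.range (evL v)) (sgn A) a := by
  simp only [ODualActive, reorient_eq, map_smul, smul_eq_mul]
  constructor
  · rintro ⟨f, h1, h2, h3⟩
    refine ⟨_, ⟨f, rfl⟩, h1, fun h => ?_, fun i hi => ?_⟩
    · rw [evL_apply] at h
      simp [h] at h2
    · exact (mul_eq_zero.1 (h3 i hi)).resolve_left (sg_ne _)
  · rintro ⟨_, ⟨f, rfl⟩, h1, h2, h3⟩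
    refine ⟨f, h1, sg_mul_pos (h1 a) h2, fun i hi => ?_⟩
    have := h3 i hi
    rw [evL_apply] at this
    simp [this]

lemma wt_pow {n : ℕ} (x u : ℝ) (K : Submodule ℝ (Fin n → ℝ)) (A : Finset (Fin n))
    (P : Fin n → Prop) (h : ∀ a, P a ↔ Act K (sgn A) a) :
    wt x u K (sgn A) = x ^ {a : Fin n | a ∉ A ∧ P a}.ncard * u ^ {a : Fin n | a ∈ A ∧ P a}.ncard := by
  classical
  have key : ∀ (Q : Fin n → Prop) (z : ℝ), z ^ {a : Fin n | Q a}.ncard = ∏ a, if Q a then z else 1 := by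
    intro Q z
    rw [Finset.prod_ite, Finset.prod_const, Finset.prod_const_one, mul_one,
      Set.ncard_eq_toFinset_card', Set.toFinset_ofPred]
  rw [key, key, ← Finset.prod_mul_distrib]
  unfold wt
  refine Finset.prod_congr rfl fun a _ => ?_
  rw [if_congr (h a).symm rfl rfl]
  by_cases h1 : a ∈ A <;> by_cases h2 : P a <;> simp [h1, h2, sgn]

lemma dd_dep {n : ℕ} {V : Type*} [AddCommGroup V] [Module ℝ V] (v : Fin n → V)
    (A : Finset (Fin n)) : A.card - vrank v ↑A = dd (dep v) (sgn A) := by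
  classical
  have hZ : Z (sgn A) = span ℝ ((fun i => (Pi.single i 1 : Fin n → ℝ)) '' (A : Set (Fin n))) := by
    apply le_antisymm
    · intro c hc
      have : c = ∑ i, c i • (Pi.single i 1 : Fin n → ℝ) := by
        ext j
        simp [Finset.sum_apply, Pi.single_apply]
      rw [this]
      refine Submodule.sum_mem _ fun i _ => ?_
      by_cases hi : i ∈ A
      · exact Submodule.smul_mem _ _ (Submodule.subset_span ⟨i, hi, rfl⟩)
      · rw [hc i (by simp [sgn, hi]), zero_smul]
        exact Submodule.zero_mem _
    · rw [Submodule.span_le]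
      rintro _ ⟨i, hi, rfl⟩ j hj
      have : j ≠ i := by
        rintro rfl
        have hi' : j ∈ A := hi
        simp [sgn, hi'] at hj
      simp [this]
  have hr := rank_null (Fintype.linearCombination ℝ v) (Z (sgn A))
  have h1 : (Z (sgn A)).map (Fintype.linearCombination ℝ v) = span ℝ (v '' ↑A) := by
    rw [hZ, Submodule.map_span, Set.image_image]
    simp
  have h2 : Module.finrank ℝ (Z (sgn A)) = A.card := by
    rw [hZ]
    have li : LinearIndependent ℝ (fun i => (Pi.single i 1 : Fin n → ℝ)) := by
      have := (Pi.basisFun ℝ (Fin n)).linearIndependent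
      convert this using 1
      ext i : 1
      simp
    have li' := li.comp (fun i : A => (i : Fin n)) Subtype.val_injective
    have := finrank_span_eq_card li'
    rw [Set.range_comp] at this
    have hA : Set.range (fun i : A => (i : Fin n)) = (A : Set (Fin n)) := by
      ext i; simp
    rw [hA] at this
    rw [this, Fintype.card_coe]
  rw [h1, h2, inf_comm] at hr
  unfold vrank dd dep
  omega

lemma dd_ev {n : ℕ} {V : Type*} [AddCommGroup V] [Module ℝ V] [FiniteDimensional ℝ V]
    (v : Fin n → V) (A : Finset (Fin n)) :
    vrank v Set.univ - vrank v ↑A = dd (LinearMap.range (evL v)) (fun i => !sgn A i) := by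
  have hmem : ∀ (S : Set (Fin n)) (f : Module.Dual ℝ V),
      f ∈ (span ℝ (v '' S)).dualAnnihilator ↔ ∀ i ∈ S, f (v i) = 0 := by
    intro S f
    rw [Submodule.mem_dualAnnihilator]
    constructor
    · intro h i hi
      exact h _ (Submodule.subset_span ⟨i, hi, rfl⟩)
    · intro h
      have : span ℝ (v '' S) ≤ LinearMap.ker f := by
        rw [Submodule.span_le]
        rintro _ ⟨i, hi, rfl⟩
        exact h i hi
      exact fun w hw => this hw
  have hr := rank_null (evL v) (span ℝ (v '' (A : Set (Fin n)))).dualAnnihilator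
  have h1 : ((span ℝ (v '' (A : Set (Fin n)))).dualAnnihilator).map (evL v) =
      LinearMap.range (evL v) ⊓ Z (fun i => !sgn A i) := by
    ext c
    simp only [Submodule.mem_map, Submodule.mem_inf, LinearMap.mem_range, mem_Z, hmem]
    constructor
    · rintro ⟨f, hf, rfl⟩
      exact ⟨⟨f, rfl⟩, fun i hi => hf i (by simpa [sgn] using hi)⟩
    · rintro ⟨⟨f, rfl⟩, hf⟩
      exact ⟨f, fun i hi => hf i (by simpa [sgn] using hi), rfl⟩
  have h2 : (span ℝ (v '' (A : Set (Fin n)))).dualAnnihilator ⊓ LinearMap.ker (evL v) =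
      (span ℝ (v '' Set.univ)).dualAnnihilator := by
    ext f
    rw [Submodule.mem_inf, hmem, hmem, LinearMap.mem_ker]
    constructor
    · rintro ⟨-, h⟩ i -
      exact congrFun h i
    · intro h
      exact ⟨fun i _ => h i trivial, funext fun i => h i trivial⟩
  rw [h1, h2] at hr
  have e1 := Subspace.finrank_add_finrank_dualAnnihilator_eq (span ℝ (v '' (A : Set (Fin n))))
  have e2 := Subspace.finrank_add_finrank_dualAnnihilator_eq (span ℝ (v '' Set.univ))
  unfold vrank dd
  omega

noncomputable def sgnEquiv (n : ℕ) : Finset (Fin n) ≃ (Fin n → Bool) where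
  toFun := sgn
  invFun σ := Finset.univ.filter (fun i => σ i = true)
  left_inv A := by ext i; simp [sgn]
  right_inv σ := by ext i; simp [sgn]

theorem expansion {n : ℕ} {V W : Type*} [AddCommGroup V] [Module ℝ V]
    [AddCommGroup W] [Module ℝ W] [FiniteDimensional ℝ W]
    (v : Fin n → V) (π : V →ₗ[ℝ] W) (x s : ℝ) :
    tuttePerspV v (π ∘ v) s s = ∑ A : Finset (Fin n),
      x ^ (thetaStar (π ∘ v) A + theta v A) *
        (s - x) ^ (thetaStarBar (π ∘ v) A + thetaBar v A) := by
  have h := main x (s - x) _ _ (orth v π)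
  unfold FF SS at h
  rw [← (sgnEquiv n).sum_comp, ← (sgnEquiv n).sum_comp] at h
  unfold tuttePerspV
  have e : x + (s - x) - 1 = s - 1 := by ring
  rw [e] at h
  have h0 : (∑ A : Finset (Fin n), (s - 1) ^ (vrank (π ∘ v) Set.univ - vrank (π ∘ v) ↑A) *
      (s - 1) ^ (A.card - vrank v ↑A)) = _ :=
    (Finset.sum_congr rfl fun A _ => by rw [dd_dep, dd_ev]; rfl).trans h.symm
  · rw [h0]
    refine Finset.sum_congr rfl fun A _ => ?_
    change wt _ _ _ (sgn A) * wt _ _ _ (sgn A) = _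
    rw [wt_pow x _ (dep v) A _ (oactive_iff v A), wt_pow x _ _ A _ (odual_iff (π ∘ v) A)]
    unfold thetaStar theta thetaStarBar thetaBar
    ring

end Persp

/-- the `p`-th derivative of the one-variable polynomial `x ↦ t(M,M';x,x,1)` is
the generating function `p! · ∑_{θ̄*_{M'}(A) + θ̄_M(A) = p} x^(θ*_{M'}(A) + θ_M(A))`. -/
theorem statement17 {n : ℕ} {V W : Type*} [AddCommGroup V] [Module ℝ V] [FiniteDimensional ℝ V]
    [AddCommGroup W] [Module ℝ W] [FiniteDimensional ℝ W]
    (v : Fin n → V) (π : V →ₗ[ℝ] W) (p : ℕ) (x : ℝ) :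
    iteratedDeriv p (fun s => tuttePerspV v (π ∘ v) s s) x =
      (p.factorial : ℝ) *
        ∑ A ∈ Finset.univ.filter
          (fun A : Finset (Fin n) => thetaStarBar (π ∘ v) A + thetaBar v A = p),
          x ^ (thetaStar (π ∘ v) A + theta v A) := by
  have h : (fun s => tuttePerspV v (π ∘ v) s s) = fun s => ∑ A : Finset (Fin n),
      x ^ (thetaStar (π ∘ v) A + theta v A) *
        (s - x) ^ (thetaStarBar (π ∘ v) A + thetaBar v A) :=
    funext fun s => Persp.expansion v π x s
  rw [h, iteratedDeriv_fun_sum (fun A _ => by fun_prop), Finset.sum_filter, Finset.mul_sum]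
  refine Finset.sum_congr rfl fun A _ => ?_
  rw [iteratedDeriv_const_mul_field]
  have h2 := congrFun (iteratedDeriv_comp_sub_const p
    (fun z : ℝ => z ^ (thetaStarBar (π ∘ v) A + thetaBar v A)) x) x
  rw [h2, sub_self, iteratedDeriv_fun_pow_zero]
  by_cases hp : p = thetaStarBar (π ∘ v) A + thetaBar v A
  · rw [if_pos hp, if_pos hp.symm, ← hp, mul_comm]
  · rw [if_neg hp, if_neg (Ne.symm hp)]
    simp
end

section
/- (Deletion/contraction dichotomy for pointwise orientation activities, realizable case.) Let n ≥ 1, let e be the greatest element of Fin n, let v : Fin n → V be a vector configuration, π : V →ₗ[ℝ] W a linear map, and v' = π ∘ v. Then at least one of the following holds: (i) for every a ≠ e: [a is dually active for v' iff a is dually active for v'\e], [a is active for v iff a is active for v\e], [a is dually active for -_e v' iff a is dually active for v'/e], and [a is active for -_e v iff a is active for v/e]; or (ii) for every a ≠ e: [a is dually active for v' iff a is dually active for v'/e], [a is active for v iff a is active for v/e], [a is dually active for -_e v' iff a is dually active for v'\e], and [a is active for -_e v iff a is active for v\e]. -/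
open Set Submodule

/-- `a` is active for the configuration `w` on the finite linearly ordered index set `I`:
`a` is the smallest element of a positive circuit, i.e. there is a nonnegative linear
dependence with positive coefficient at `a` and zero coefficients below `a`. -/
def ActiveI {I : Type*} [Fintype I] [LinearOrder I] {U : Type*} [AddCommGroup U] [Module ℝ U]
    (w : I → U) (a : I) : Prop :=
  ∃ c : I → ℝ, (∀ i, 0 ≤ c i) ∧ (∑ i, c i • w i) = 0 ∧ 0 < c a ∧ ∀ i < a, c i = 0

/-- `a` is dually active for the configuration `w`: `a` is the smallest element of a positive
cocircuit, i.e. there is a linear functional, nonnegative on the configuration, positive at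
`w a` and vanishing on the vectors below `a`. -/
def DualActiveI {I : Type*} [Fintype I] [LinearOrder I] {U : Type*} [AddCommGroup U] [Module ℝ U]
    (w : I → U) (a : I) : Prop :=
  ∃ f : U →ₗ[ℝ] ℝ, (∀ i, 0 ≤ f (w i)) ∧ 0 < f (w a) ∧ ∀ i < a, f (w i) = 0

/-- The reorientation of the configuration `w` at the single element `e`. -/
def reorientAt {I : Type*} [DecidableEq I] {U : Type*} [AddCommGroup U]
    (w : I → U) (e : I) : I → U :=
  fun i => if i = e then -w i else w i

/-- Signed vectors of the subspace `L`, nonnegative off `e`, with smallest element `a`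
and value `t` at `e`. -/
def QS {n : ℕ} (e : Fin n) (L : Submodule ℝ (Fin n → ℝ)) (a : Fin n) (t : ℝ) : Prop :=
  ∃ c ∈ L, (∀ i, i ≠ e → 0 ≤ c i) ∧ 0 < c a ∧ (∀ i < a, c i = 0) ∧ c e = t

/-- The space of linear dependences. -/
def depS {n : ℕ} {U : Type*} [AddCommGroup U] [Module ℝ U] (w : Fin n → U) :
    Submodule ℝ (Fin n → ℝ) where
  carrier := {c | ∑ i, c i • w i = 0}
  add_mem' := by
    intro a b ha hb
    simp only [Set.mem_setOf_eq] at *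
    simp [add_smul, Finset.sum_add_distrib, ha, hb]
  zero_mem' := by simp
  smul_mem' := by
    intro r a ha
    simp only [Set.mem_setOf_eq] at *
    simp [mul_smul, ← Finset.smul_sum, ha]

/-- The space of value vectors of functionals. -/
def valS {n : ℕ} {U : Type*} [AddCommGroup U] [Module ℝ U] (w : Fin n → U) :
    Submodule ℝ (Fin n → ℝ) where
  carrier := {c | ∃ f : U →ₗ[ℝ] ℝ, ∀ i, c i = f (w i)}
  add_mem' := by
    rintro a b ⟨f, hf⟩ ⟨g, hg⟩
    exact ⟨f + g, fun i => by simp [hf, hg]⟩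
  zero_mem' := ⟨0, by simp⟩
  smul_mem' := by
    rintro r a ⟨f, hf⟩
    exact ⟨r • f, fun i => by simp [hf]⟩

theorem QS_comb {n : ℕ} {e : Fin n} {L : Submodule ℝ (Fin n → ℝ)} {a b : Fin n} {s t : ℝ}
    (hab : a ≤ b) (hb : b ≠ e) (hst : s * t < 0) (h1 : QS e L a s) (h2 : QS e L b t) :
    QS e L a 0 := by
  obtain ⟨c, hc, c0, ca, cl, ce⟩ := h1
  obtain ⟨d, hd, d0, da, dl, de⟩ := h2
  have ht : t ≠ 0 := by rintro rfl; simp at hst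
  have hr : 0 ≤ -s / t := by
    have : -s / t = (-(s * t)) / (t * t) := by field_simp
    rw [this]
    exact div_nonneg (by linarith) (mul_self_nonneg t)
  have hda : 0 ≤ d a := by
    rcases hab.lt_or_eq with h | h
    · rw [dl a h]
    · rw [h]; exact da.le
  refine ⟨c + (-s / t) • d, L.add_mem hc (L.smul_mem _ hd), ?_, ?_, ?_, ?_⟩
  · intro i hi
    have := mul_nonneg hr (d0 i hi)
    have := c0 i hi
    simp only [Pi.add_apply, Pi.smul_apply, smul_eq_mul]; linarith
  · have := mul_nonneg hr hda
    simp only [Pi.add_apply, Pi.smul_apply, smul_eq_mul]; linarith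
  · intro i hi
    simp [cl i hi, dl i (hi.trans_le hab)]
  · simp only [Pi.add_apply, Pi.smul_apply, smul_eq_mul, ce, de]
    field_simp
    ring

theorem QS_orth {n : ℕ} {e : Fin n} {V W : Type*} [AddCommGroup V] [Module ℝ V]
    [AddCommGroup W] [Module ℝ W] (v : Fin n → V) (π : V →ₗ[ℝ] W) {a b : Fin n} {s t : ℝ}
    (h1 : QS e (depS v) a s) (h2 : QS e (valS (π ∘ v)) b t) : s * t ≤ 0 := by
  obtain ⟨c, hc, c0, -, -, ce⟩ := h1
  obtain ⟨d, ⟨f, hf⟩, d0, -, -, de⟩ := h2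
  have h : ∑ i, c i * d i = 0 := by
    have := congrArg (fun x => f (π x)) (show ∑ i, c i • v i = 0 from hc)
    simpa [map_sum, hf] using this
  rw [← Finset.add_sum_erase _ _ (Finset.mem_univ e), ce, de] at h
  have : 0 ≤ ∑ i ∈ Finset.univ.erase e, c i * d i :=
    Finset.sum_nonneg fun i hi =>
      mul_nonneg (c0 i (Finset.ne_of_mem_erase hi)) (d0 i (Finset.ne_of_mem_erase hi))
  linarith

section trans
variable {n : ℕ} {e : Fin n} {U : Type*} [AddCommGroup U] [Module ℝ U] (w : Fin n → U)

theorem act_pos (a : Fin n) : ActiveI w a ↔ ∃ t, 0 ≤ t ∧ QS e (depS w) a t := by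
  constructor
  · rintro ⟨c, c0, h, ca, cl⟩
    exact ⟨c e, c0 e, c, h, fun i _ => c0 i, ca, cl, rfl⟩
  · rintro ⟨t, ht, c, h, c0, ca, cl, ce⟩
    refine ⟨c, fun i => ?_, h, ca, cl⟩
    by_cases hi : i = e
    · rw [hi, ce]; exact ht
    · exact c0 i hi

theorem dual_pos (a : Fin n) : DualActiveI w a ↔ ∃ t, 0 ≤ t ∧ QS e (valS w) a t := by
  constructor
  · rintro ⟨f, c0, ca, cl⟩
    exact ⟨f (w e), c0 e, fun i => f (w i), ⟨f, fun _ => rfl⟩, fun i _ => c0 i, ca, cl, rfl⟩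
  · rintro ⟨t, ht, c, ⟨f, hf⟩, c0, ca, cl, ce⟩
    refine ⟨f, fun i => ?_, by rwa [← hf], fun i hi => by rw [← hf, cl i hi]⟩
    rw [← hf]
    by_cases hi : i = e
    · rw [hi, ce]; exact ht
    · exact c0 i hi

/-- sign change at `e` -/
def flipAt (e : Fin n) (c : Fin n → ℝ) : Fin n → ℝ := fun i => if i = e then -c i else c i

theorem flip_QS {L M : Submodule ℝ (Fin n → ℝ)} (hLM : ∀ c ∈ L, flipAt e c ∈ M)
    {a : Fin n} (ha : a < e) {t : ℝ} (h : QS e L a t) : QS e M a (-t) := by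
  obtain ⟨c, hc, c0, ca, cl, ce⟩ := h
  refine ⟨flipAt e c, hLM c hc, fun i hi => ?_, ?_, fun i hi => ?_, ?_⟩
  · simpa [flipAt, hi] using c0 i hi
  · simpa [flipAt, ha.ne] using ca
  · simpa [flipAt, (hi.trans ha).ne] using cl i hi
  · simp [flipAt, ce]

theorem reorient_reorient : reorientAt (reorientAt w e) e = w := by
  funext i; by_cases h : i = e <;> simp [reorientAt, h]

theorem flip_dep (c : Fin n → ℝ) (hc : c ∈ depS w) : flipAt e c ∈ depS (reorientAt w e) := by
  have h : ∑ i, c i • w i = 0 := hc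
  change ∑ i, flipAt e c i • reorientAt w e i = 0
  rw [← h]
  refine Finset.sum_congr rfl fun i _ => ?_
  by_cases h : i = e <;> simp [reorientAt, flipAt, h]

theorem flip_val (c : Fin n → ℝ) (hc : c ∈ valS w) : flipAt e c ∈ valS (reorientAt w e) := by
  obtain ⟨f, hf⟩ := hc
  refine ⟨f, fun i => ?_⟩
  by_cases h : i = e <;> simp [reorientAt, flipAt, h, hf]

theorem act_neg {a : Fin n} (ha : a < e) :
    ActiveI (reorientAt w e) a ↔ ∃ t, t ≤ 0 ∧ QS e (depS w) a t := by
  rw [act_pos (e := e)]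
  constructor
  · rintro ⟨t, ht, h⟩
    refine ⟨-t, by linarith, flip_QS (fun c hc => ?_) ha h⟩
    simpa [reorient_reorient] using flip_dep (e := e) _ c hc
  · rintro ⟨t, ht, h⟩
    exact ⟨-t, by linarith, flip_QS (flip_dep w) ha h⟩

theorem dual_neg {a : Fin n} (ha : a < e) :
    DualActiveI (reorientAt w e) a ↔ ∃ t, t ≤ 0 ∧ QS e (valS w) a t := by
  rw [dual_pos (e := e)]
  constructor
  · rintro ⟨t, ht, h⟩
    refine ⟨-t, by linarith, flip_QS (fun c hc => ?_) ha h⟩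
    simpa [reorient_reorient] using flip_val (e := e) _ c hc
  · rintro ⟨t, ht, h⟩
    exact ⟨-t, by linarith, flip_QS (flip_val w) ha h⟩

theorem sum_split {X : Type*} [AddCommGroup X] (e : Fin n) (g : Fin n → X) :
    ∑ i, g i = g e + ∑ b : {b : Fin n // b ≠ e}, g b :=
  Fintype.sum_eq_add_sum_subtype_ne g e

/-- extension of a vector by the value `t` at `e` -/
def extAt (e : Fin n) (t : ℝ) (c : {b : Fin n // b ≠ e} → ℝ) : Fin n → ℝ :=
  fun i => if h : i = e then t else c ⟨i, h⟩

theorem ext_sum (t : ℝ) (c : {b : Fin n // b ≠ e} → ℝ) :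
    ∑ i, extAt e t c i • w i = t • w e + ∑ b : {b : Fin n // b ≠ e}, c b • w b := by
  rw [sum_split e]
  congr 1
  · simp [extAt]
  · refine Finset.sum_congr rfl fun b _ => ?_
    simp [extAt, b.2]

theorem ext_QS {t : ℝ} {c : {b : Fin n // b ≠ e} → ℝ} {L : Submodule ℝ (Fin n → ℝ)}
    (hL : extAt e t c ∈ L) (c0 : ∀ i, 0 ≤ c i) {a : {b : Fin n // b ≠ e}} (hae : (a : Fin n) < e)
    (ca : 0 < c a)
    (cl : ∀ i < a, c i = 0) : QS e L a t := by
  refine ⟨_, hL, fun i hi => ?_, ?_, fun i hi => ?_, by simp [extAt]⟩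
  · simpa [extAt, hi] using c0 ⟨i, hi⟩
  · simpa [extAt, a.2] using ca
  · have hie := (hi.trans hae).ne
    simpa [extAt, hie] using cl ⟨i, hie⟩ hi

theorem act_del (a : {b : Fin n // b ≠ e}) (ha : (a : Fin n) < e) :
    ActiveI (fun b : {b : Fin n // b ≠ e} => w b) a ↔ QS e (depS w) a 0 := by
  constructor
  · rintro ⟨c, c0, h, ca, cl⟩
    refine ext_QS ?_ c0 ha ca cl
    change ∑ i, _ = 0
    rw [ext_sum, h]; simp
  · rintro ⟨c, h, c0, ca, cl, ce⟩
    refine ⟨fun b => c b, fun b => c0 b b.2, ?_, ca, fun i hi => cl i hi⟩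
    have h : ∑ i, c i • w i = 0 := h
    rw [sum_split e, ce] at h
    simpa using h

theorem act_con (a : {b : Fin n // b ≠ e}) (ha : (a : Fin n) < e) :
    ActiveI (fun b : {b : Fin n // b ≠ e} => (span ℝ {w e}).mkQ (w b)) a ↔
      ∃ t, QS e (depS w) a t := by
  constructor
  · rintro ⟨c, c0, h, ca, cl⟩
    have h2 : (span ℝ {w e}).mkQ (∑ b : {b : Fin n // b ≠ e}, c b • w b) = 0 := by
      rw [← h, map_sum]; simp only [map_smul]
    rw [mkQ_apply, Submodule.Quotient.mk_eq_zero, mem_span_singleton] at h2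
    obtain ⟨t, ht⟩ := h2
    refine ⟨-t, ext_QS ?_ c0 ha ca cl⟩
    change ∑ i, _ = 0
    rw [ext_sum, ← ht]; simp
  · rintro ⟨t, c, h, c0, ca, cl, ce⟩
    refine ⟨fun b => c b, fun b => c0 b b.2, ?_, ca, fun i hi => cl i hi⟩
    have h : ∑ i, c i • w i = 0 := h
    rw [sum_split e] at h
    have h2 := congrArg (span ℝ {w e}).mkQ h
    have h3 : (span ℝ {w e}).mkQ (w e) = 0 := by
      rw [mkQ_apply, Submodule.Quotient.mk_eq_zero]; exact mem_span_singleton_self _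
    rw [map_add, map_smul, h3, smul_zero, zero_add, map_zero, map_sum] at h2
    simpa only [map_smul] using h2

theorem dual_del (a : {b : Fin n // b ≠ e}) (ha : (a : Fin n) < e) :
    DualActiveI (fun b : {b : Fin n // b ≠ e} => w b) a ↔ ∃ t, QS e (valS w) a t := by
  constructor
  · rintro ⟨f, c0, ca, cl⟩
    exact ⟨f (w e), fun i => f (w i), ⟨f, fun _ => rfl⟩, fun i hi => c0 ⟨i, hi⟩, ca,
      fun i hi => cl ⟨i, (hi.trans ha).ne⟩ hi, rfl⟩
  · rintro ⟨t, c, ⟨f, hf⟩, c0, ca, cl, ce⟩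
    exact ⟨f, fun i => by rw [← hf]; exact c0 i i.2, by rwa [← hf],
      fun i hi => by rw [← hf, cl i hi]⟩

theorem dual_con (a : {b : Fin n // b ≠ e}) (ha : (a : Fin n) < e) :
    DualActiveI (fun b : {b : Fin n // b ≠ e} => (span ℝ {w e}).mkQ (w b)) a ↔
      QS e (valS w) a 0 := by
  constructor
  · rintro ⟨f, c0, ca, cl⟩
    have h3 : (span ℝ {w e}).mkQ (w e) = 0 := by
      rw [mkQ_apply, Submodule.Quotient.mk_eq_zero]; exact mem_span_singleton_self _
    exact ⟨fun i => f ((span ℝ {w e}).mkQ (w i)), ⟨f ∘ₗ (span ℝ {w e}).mkQ, fun _ => rfl⟩,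
      fun i hi => c0 ⟨i, hi⟩, ca,
      fun i hi => cl ⟨i, (hi.trans ha).ne⟩ hi, by simp only [h3, map_zero]⟩
  · rintro ⟨c, ⟨f, hf⟩, c0, ca, cl, ce⟩
    have hk : span ℝ {w e} ≤ LinearMap.ker f := by
      rw [span_singleton_le_iff_mem, LinearMap.mem_ker, ← hf, ce]
    refine ⟨(span ℝ {w e}).liftQ f hk, fun i => ?_, ?_, fun i hi => ?_⟩
    · simpa [← hf] using c0 i i.2
    · simpa [← hf] using ca
    · simpa [← hf] using cl i hi

end trans

/-- For each sign, one of the two inclusions fails only with a strict witness. -/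
theorem QS_wit {n : ℕ} {e : Fin n} {L : Submodule ℝ (Fin n → ℝ)} {a b : Fin n} {s t : ℝ}
    (ha : a ≠ e) (hb : b ≠ e) (h1 : QS e L a s) (h2 : QS e L b t) (hst : s * t < 0)
    (na : ¬ QS e L a 0) (nb : ¬ QS e L b 0) : False := by
  rcases le_total a b with h | h
  · exact na (QS_comb h hb hst h1 h2)
  · exact nb (QS_comb h ha (by linarith [mul_comm s t]) h2 h1)

theorem QS_pm {n : ℕ} {e : Fin n} {L : Submodule ℝ (Fin n → ℝ)} {a : Fin n} (ha : a ≠ e)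
    (h1 : ∃ t, 0 ≤ t ∧ QS e L a t) (h2 : ∃ t, t ≤ 0 ∧ QS e L a t) : QS e L a 0 := by
  obtain ⟨s, hs, h1⟩ := h1
  obtain ⟨t, ht, h2⟩ := h2
  rcases hs.lt_or_eq with hs | rfl
  · rcases ht.lt_or_eq with ht | rfl
    · exact QS_comb le_rfl ha (mul_neg_of_pos_of_neg hs ht) h1 h2
    · exact h2
  · exact h1

theorem QS_any {n : ℕ} {e : Fin n} {L : Submodule ℝ (Fin n → ℝ)} {a : Fin n} :
    (∃ t, QS e L a t) ↔ (∃ t, 0 ≤ t ∧ QS e L a t) ∨ (∃ t, t ≤ 0 ∧ QS e L a t) := by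
  constructor
  · rintro ⟨t, h⟩
    rcases le_total 0 t with ht | ht
    · exact Or.inl ⟨t, ht, h⟩
    · exact Or.inr ⟨t, ht, h⟩
  · rintro (⟨t, -, h⟩ | ⟨t, -, h⟩) <;> exact ⟨t, h⟩

theorem QS_zero {n : ℕ} {e : Fin n} {L : Submodule ℝ (Fin n → ℝ)} {a : Fin n} (ha : a ≠ e) :
    QS e L a 0 ↔ (∃ t, 0 ≤ t ∧ QS e L a t) ∧ (∃ t, t ≤ 0 ∧ QS e L a t) :=
  ⟨fun h => ⟨⟨0, le_rfl, h⟩, ⟨0, le_rfl, h⟩⟩, fun h => QS_pm ha h.1 h.2⟩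

/-- A strictly positive, resp. negative, witness (`σ = 1` or `-1`). -/
theorem QS_strict_pos {n : ℕ} {e : Fin n} {L : Submodule ℝ (Fin n → ℝ)} {a : Fin n}
    (h1 : ∃ t, 0 ≤ t ∧ QS e L a t) (h2 : ¬ ∃ t, t ≤ 0 ∧ QS e L a t) :
    ∃ t, 0 < t ∧ QS e L a t ∧ ¬ QS e L a 0 := by
  have h0 : ¬ QS e L a 0 := fun h => h2 ⟨0, le_rfl, h⟩
  obtain ⟨t, ht, h⟩ := h1
  exact ⟨t, lt_of_le_of_ne ht (by rintro rfl; exact h0 h), h, h0⟩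

theorem QS_strict_neg {n : ℕ} {e : Fin n} {L : Submodule ℝ (Fin n → ℝ)} {a : Fin n}
    (h1 : ∃ t, t ≤ 0 ∧ QS e L a t) (h2 : ¬ ∃ t, 0 ≤ t ∧ QS e L a t) :
    ∃ t, t < 0 ∧ QS e L a t ∧ ¬ QS e L a 0 := by
  have h0 : ¬ QS e L a 0 := fun h => h2 ⟨0, le_rfl, h⟩
  obtain ⟨t, ht, h⟩ := h1
  exact ⟨t, lt_of_le_of_ne ht (by rintro rfl; exact h0 h), h, h0⟩

/-- deletion/contraction dichotomy for pointwise orientation activities of an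
oriented matroid perspective realized by `v` and `v' = π ∘ v`, with `e` the greatest element. -/
theorem statement18 {V W : Type*} [AddCommGroup V] [Module ℝ V] [FiniteDimensional ℝ V]
    [AddCommGroup W] [Module ℝ W] [FiniteDimensional ℝ W]
    {n : ℕ} (hn : 1 ≤ n) (e : Fin n) (he : ∀ i : Fin n, i ≤ e)
    (v : Fin n → V) (π : V →ₗ[ℝ] W) :
    (∀ a : {a : Fin n // a ≠ e},
      (DualActiveI (π ∘ v) ↑a ↔
        DualActiveI (fun b : {b : Fin n // b ≠ e} => π (v ↑b)) a) ∧
      (ActiveI v ↑a ↔ ActiveI (fun b : {b : Fin n // b ≠ e} => v ↑b) a) ∧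
      (DualActiveI (reorientAt (π ∘ v) e) ↑a ↔
        DualActiveI (fun b : {b : Fin n // b ≠ e} => (span ℝ {π (v e)}).mkQ (π (v ↑b))) a) ∧
      (ActiveI (reorientAt v e) ↑a ↔
        ActiveI (fun b : {b : Fin n // b ≠ e} => (span ℝ {v e}).mkQ (v ↑b)) a)) ∨
    (∀ a : {a : Fin n // a ≠ e},
      (DualActiveI (π ∘ v) ↑a ↔
        DualActiveI (fun b : {b : Fin n // b ≠ e} => (span ℝ {π (v e)}).mkQ (π (v ↑b))) a) ∧
      (ActiveI v ↑a ↔ ActiveI (fun b : {b : Fin n // b ≠ e} => (span ℝ {v e}).mkQ (v ↑b)) a) ∧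
      (DualActiveI (reorientAt (π ∘ v) e) ↑a ↔
        DualActiveI (fun b : {b : Fin n // b ≠ e} => π (v ↑b)) a) ∧
      (ActiveI (reorientAt v e) ↑a ↔
        ActiveI (fun b : {b : Fin n // b ≠ e} => v ↑b) a)) := by
  have hlt : ∀ a : {a : Fin n // a ≠ e}, (a : Fin n) < e := fun a => lt_of_le_of_ne (he a) a.2
  have key : (∀ a : {a : Fin n // a ≠ e},
      ((∃ t, t ≤ 0 ∧ QS e (valS (π ∘ v)) a t) → ∃ t, 0 ≤ t ∧ QS e (valS (π ∘ v)) a t) ∧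
      ((∃ t, 0 ≤ t ∧ QS e (depS v) a t) → ∃ t, t ≤ 0 ∧ QS e (depS v) a t)) ∨
      (∀ a : {a : Fin n // a ≠ e},
      ((∃ t, 0 ≤ t ∧ QS e (valS (π ∘ v)) a t) → ∃ t, t ≤ 0 ∧ QS e (valS (π ∘ v)) a t) ∧
      ((∃ t, t ≤ 0 ∧ QS e (depS v) a t) → ∃ t, 0 ≤ t ∧ QS e (depS v) a t)) := by
    by_contra hcon
    rw [not_or, not_forall, not_forall] at hcon
    obtain ⟨⟨a, ha⟩, ⟨b, hb⟩⟩ := hcon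
    rw [not_and_or, Classical.not_imp, Classical.not_imp] at ha hb
    rcases ha with ⟨ha1, ha2⟩ | ⟨ha1, ha2⟩ <;> rcases hb with ⟨hb1, hb2⟩ | ⟨hb1, hb2⟩
    · obtain ⟨s, hs, h1, n1⟩ := QS_strict_neg ha1 ha2
      obtain ⟨t, ht, h2, n2⟩ := QS_strict_pos hb1 hb2
      exact QS_wit a.2 b.2 h1 h2 (mul_neg_of_neg_of_pos hs ht) n1 n2
    · obtain ⟨s, hs, h1, n1⟩ := QS_strict_neg ha1 ha2
      obtain ⟨t, ht, h2, n2⟩ := QS_strict_neg hb1 hb2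
      exact absurd (QS_orth v π h2 h1) (not_le.2 (mul_pos_of_neg_of_neg ht hs))
    · obtain ⟨s, hs, h1, n1⟩ := QS_strict_pos ha1 ha2
      obtain ⟨t, ht, h2, n2⟩ := QS_strict_pos hb1 hb2
      exact absurd (QS_orth v π h1 h2) (not_le.2 (mul_pos hs ht))
    · obtain ⟨s, hs, h1, n1⟩ := QS_strict_pos ha1 ha2
      obtain ⟨t, ht, h2, n2⟩ := QS_strict_neg hb1 hb2
      exact QS_wit a.2 b.2 h1 h2 (mul_neg_of_pos_of_neg hs ht) n1 n2
  have D1 := fun a : {a : Fin n // a ≠ e} => dual_pos (e := e) (π ∘ v) a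
  have D2 := fun a : {a : Fin n // a ≠ e} => dual_neg (e := e) (π ∘ v) (hlt a)
  have D3 := fun a : {a : Fin n // a ≠ e} =>
    (dual_del (e := e) (π ∘ v) a (hlt a)).trans QS_any
  have D4 := fun a : {a : Fin n // a ≠ e} =>
    (dual_con (e := e) (π ∘ v) a (hlt a)).trans (QS_zero a.2)
  have A1 := fun a : {a : Fin n // a ≠ e} => act_pos (e := e) v a
  have A2 := fun a : {a : Fin n // a ≠ e} => act_neg (e := e) v (hlt a)
  have A3 := fun a : {a : Fin n // a ≠ e} => (act_del (e := e) v a (hlt a)).trans (QS_zero a.2)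
  have A4 := fun a : {a : Fin n // a ≠ e} => (act_con (e := e) v a (hlt a)).trans QS_any
  simp only [Function.comp_apply] at D3 D4
  refine key.imp (fun h a => ?_) (fun h a => ?_)
  · obtain ⟨h1, h2⟩ := h a
    rw [D1, D2, D3, D4, A1, A2, A3, A4]
    clear D1 D2 D3 D4 A1 A2 A3 A4 h key
    generalize (∃ t, 0 ≤ t ∧ QS e (valS (π ∘ v)) a t) = p at *
    generalize (∃ t, t ≤ 0 ∧ QS e (valS (π ∘ v)) a t) = q at *
    generalize (∃ t, 0 ≤ t ∧ QS e (depS v) a t) = r at *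
    generalize (∃ t, t ≤ 0 ∧ QS e (depS v) a t) = s at *
    clear hlt he hn
    tauto
  · obtain ⟨h1, h2⟩ := h a
    rw [D1, D2, D3, D4, A1, A2, A3, A4]
    clear D1 D2 D3 D4 A1 A2 A3 A4 h key
    generalize (∃ t, 0 ≤ t ∧ QS e (valS (π ∘ v)) a t) = p at *
    generalize (∃ t, t ≤ 0 ∧ QS e (valS (π ∘ v)) a t) = q at *
    generalize (∃ t, 0 ≤ t ∧ QS e (depS v) a t) = r at *
    generalize (∃ t, t ≤ 0 ∧ QS e (depS v) a t) = s at *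
    clear hlt he hn
    tauto
end

section
/- (Propagation of activity agreement under deletion, realizable case.) Let n ≥ 1, let e be the greatest element of Fin n, and let v : Fin n → V be a vector configuration. If there exists b ≠ e such that [b is active for v] is not equivalent to [b is active for -_e v], while [b is active for v] is equivalent to [b is active for v\e], then for every a ≠ e, [a is active for v] is equivalent to [a is active for v\e]. -/
open Set Submodule

/-- Activity in the deletion, via dependences on the full index set vanishing at `e`. -/
lemma activeI_deletion_iff {V : Type*} [AddCommGroup V] [Module ℝ V]
    {n : ℕ} (e : Fin n) (he : ∀ i : Fin n, i ≤ e) (v : Fin n → V) (a : {a : Fin n // a ≠ e}) :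
    ActiveI (fun i : {i : Fin n // i ≠ e} => v ↑i) a ↔
      ∃ c : Fin n → ℝ, (∀ i, 0 ≤ c i) ∧ (∑ i, c i • v i) = 0 ∧ 0 < c a ∧
        (∀ i < (a : Fin n), c i = 0) ∧ c e = 0 := by
  have key : ∀ c : Fin n → ℝ, c e = 0 →
      ∑ i, c i • v i = ∑ i : {i : Fin n // i ≠ e}, c i • v i := by
    intro c hc
    rw [← Finset.add_sum_erase _ _ (Finset.mem_univ e), hc, zero_smul, zero_add]
    exact Finset.sum_subtype (Finset.univ.erase e) (by simp) (fun i => c i • v i)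
  constructor
  · rintro ⟨c, h0, hs, hp, hz⟩
    refine ⟨fun i => if h : i ≠ e then c ⟨i, h⟩ else 0, ?_, ?_, ?_, ?_, ?_⟩
    · intro i
      dsimp only
      split_ifs
      · exact h0 _
      · exact le_rfl
    · rw [key _ (by simp), ← hs]
      refine Finset.sum_congr rfl fun i _ => ?_
      rw [dif_pos i.2]
    · dsimp only
      rw [dif_pos a.2]
      exact hp
    · intro i hi
      dsimp only
      split_ifs with h
      · exact hz ⟨i, h⟩ hi
      · rfl
    · simp
  · rintro ⟨c, h0, hs, hp, hz, hc⟩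
    refine ⟨fun i => c i, fun i => h0 i, ?_, hp, fun i hi => hz i hi⟩
    rw [← key c hc, hs]

/-- propagation of activity agreement under deletion. If for some `b ≠ e`
(with `e` the greatest element) activity for `v` and for `-_e v` disagree while activity for
`v` and for `v \ e` agree, then activity for `v` and for `v \ e` agree at every `a ≠ e`. -/
theorem statement19 {V : Type*} [AddCommGroup V] [Module ℝ V] [FiniteDimensional ℝ V]
    {n : ℕ} (hn : 1 ≤ n) (e : Fin n) (he : ∀ i : Fin n, i ≤ e) (v : Fin n → V)
    (b : Fin n) (hb : b ≠ e)
    (h1 : ¬ (ActiveI v b ↔ ActiveI (reorientAt v e) b))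
    (h2 : ActiveI v b ↔ ActiveI (fun i : {i : Fin n // i ≠ e} => v ↑i) ⟨b, hb⟩) :
    ∀ a : {a : Fin n // a ≠ e},
      ActiveI v ↑a ↔ ActiveI (fun i : {i : Fin n // i ≠ e} => v ↑i) a := by
  classical
  have del_v : ∀ a : {a : Fin n // a ≠ e},
      ActiveI (fun i : {i : Fin n // i ≠ e} => v ↑i) a → ActiveI v a := by
    intro a h
    obtain ⟨c, h0, hs, hp, hz, -⟩ := (activeI_deletion_iff e he v a).1 h
    exact ⟨c, h0, hs, hp, hz⟩
  have del_r : ∀ a : {a : Fin n // a ≠ e},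
      ActiveI (fun i : {i : Fin n // i ≠ e} => v ↑i) a → ActiveI (reorientAt v e) a := by
    intro a h
    obtain ⟨c, h0, hs, hp, hz, hc⟩ := (activeI_deletion_iff e he v a).1 h
    refine ⟨c, h0, ?_, hp, hz⟩
    rw [← hs]
    refine Finset.sum_congr rfl fun i _ => ?_
    unfold reorientAt
    split_ifs with h
    · subst h; simp [hc]
    · rfl
  have hnd : ¬ ActiveI (fun i : {i : Fin n // i ≠ e} => v ↑i) ⟨b, hb⟩ := fun h =>
    h1 ⟨fun _ => del_r _ h, fun _ => del_v _ h⟩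
  have hr : ActiveI (reorientAt v e) b := by
    by_contra h
    exact h1 ⟨fun h' => absurd (h2.1 h') hnd, fun h' => absurd h' h⟩
  obtain ⟨c', h0', hs', hp', hz'⟩ := hr
  obtain ⟨d, hd⟩ : ∃ d : Fin n → ℝ, d = fun i => if i = e then -c' i else c' i := ⟨_, rfl⟩
  have hd0 : ∀ i, i ≠ e → d i = c' i := fun i hi => by simp [hd, hi]
  have hde : d e = -c' e := by simp [hd]
  have hds : ∑ i, d i • v i = 0 := by
    rw [← hs']
    refine Finset.sum_congr rfl fun i _ => ?_
    by_cases h : i = e <;> simp [hd, reorientAt, h]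
  have hltb : ∀ i < b, i ≠ e := fun i hi h => absurd (he b) (by rw [← h]; exact not_le.2 hi)
  have hdz : ∀ i < b, d i = 0 := fun i hi => by rw [hd0 i (hltb i hi), hz' i hi]
  have hce : 0 < c' e := by
    rcases (h0' e).lt_or_eq with h | h
    · exact h
    · exfalso
      refine hnd ((activeI_deletion_iff e he v ⟨b, hb⟩).2 ⟨d, ?_, hds, ?_, hdz, ?_⟩)
      · intro i
        by_cases hi : i = e
        · rw [hi, hde, ← h, neg_zero]
        · rw [hd0 i hi]; exact h0' i
      · rw [hd0 b hb]; exact hp'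
      · rw [hde, ← h, neg_zero]
  intro a
  refine ⟨?_, del_v a⟩
  rintro ⟨c, h0, hs, hp, hz⟩
  rcases (h0 e).lt_or_eq with hc | hc
  swap
  · exact (activeI_deletion_iff e he v a).2 ⟨c, h0, hs, hp, hz, hc.symm⟩
  have f0 : ∀ i, 0 ≤ c' e * c i + c e * d i := by
    intro i
    by_cases hi : i = e
    · rw [hi, hde]; apply le_of_eq; ring
    · rw [hd0 i hi]
      exact add_nonneg (mul_nonneg hce.le (h0 i)) (mul_nonneg hc.le (h0' i))
  have fs : ∑ i, (c' e * c i + c e * d i) • v i = 0 := by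
    simp only [add_smul, mul_smul, Finset.sum_add_distrib, ← Finset.smul_sum, hs, hds, smul_zero,
      add_zero]
  have fe : c' e * c e + c e * d e = 0 := by rw [hde]; ring
  rcases lt_or_ge (a : Fin n) b with hab | hab
  · refine (activeI_deletion_iff e he v a).2 ⟨_, f0, fs, ?_, ?_, fe⟩
    · rw [hdz _ hab, mul_zero, add_zero]
      exact mul_pos hce hp
    · intro i hi
      simp [hz i hi, hdz i (hi.trans hab)]
  · refine absurd ((activeI_deletion_iff e he v ⟨b, hb⟩).2 ⟨_, f0, fs, ?_, ?_, fe⟩) hnd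
    · dsimp only
      rw [hd0 b hb]
      exact add_pos_of_nonneg_of_pos (mul_nonneg hce.le (h0 b)) (mul_pos hc hp')
    · intro i hi
      have hi' : i < b := hi
      simp [hz i (hi'.trans_le hab), hdz i hi']
end
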